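/- Let φ be holomorphic and injective on the exterior disk Δ = {z ∈ ℂ : |z| > 1}, with Laurent expansion φ(z) = z + φ₀ + ∑_{k≥1} φ_{-k} z^{-k} at infinity, and let a_{kℓ} be its Grunsky coefficients. For each n ≥ 1 the limit Z̃_n = lim_{r→1+} Z_n(r)/(2π)^n exists in (0, ∞] (since r ↦ E_n(r) is nonincreasing on (1,∞)), and the following are equivalent: (i) ∑_{k,ℓ≥1} kℓ |a_{kℓ}|² < ∞ (i.e. the curve is a Weil–Petersson quasicircle); (ii) limsup_{n→∞} Z̃_n < ∞. -/

import Mathlib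

open MeasureTheory Filter

/-- The partition function `Z_n(γ_r)` of the Coulomb gas (at `β = 2`) on the analytic
curve `γ_r`, the image of the unit circle under `φ_r(z) = φ(rz)/r`:
`Z_n(r) = (1/(n! r^{n(n-1)})) ∫_{[−π,π]^n} ∏_{μ<ν} |φ(re^{iθ_μ}) − φ(re^{iθ_ν})|²
∏_μ |φ'(re^{iθ_μ})| dθ`. -/
noncomputable def Zn (φ : ℂ → ℂ) (n : ℕ) (r : ℝ) : ℝ :=
  (1 / (n.factorial * r ^ (n * (n - 1)))) *
    ∫ θ in Set.pi Set.univ (fun _ : Fin n => Set.Icc (-Real.pi) Real.pi),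
      (∏ p ∈ Finset.univ.filter (fun p : Fin n × Fin n => p.1 < p.2),
        norm (φ ((r : ℂ) * Complex.exp (Complex.I * (θ p.1 : ℂ)))
          - φ ((r : ℂ) * Complex.exp (Complex.I * (θ p.2 : ℂ)))) ^ 2) *
      ∏ μ, norm (deriv φ ((r : ℂ) * Complex.exp (Complex.I * (θ μ : ℂ))))

/-- `E_n(r) = log(Z_n(r)/(2π)^n)`, the "finite `n` Loewner energy" of `γ_r`. -/
noncomputable def En (φ : ℂ → ℂ) (n : ℕ) (r : ℝ) : ℝ :=
  Real.log (Zn φ n r / (2 * Real.pi) ^ n)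

open scoped ENNReal

/-!
Put `x = ζ⁻¹`, `y = z⁻¹` and `F(x, y) = ∑ a_{kl} xᵏ yˡ`. The function
`A(x, y) = F(x, x) + F(y, y) - 2 F(x, y)` vanishes on the diagonal and
`exp (-A / 2) = 1 + (y - x) ∑ m_{jk} xʲ yᵏ` defines an array `m`. By the Grunsky relation,
`y⁻ʲ + y ∑ₖ m_{jk} yᵏ = P_j(φ(y⁻¹)) s(y)` with `P_j` a monic polynomial of degree `j` and
`s(y) = exp (-F(y, y) / 2)` a square root of `φ'(y⁻¹)`. Hence the Vandermonde determinant,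
Andréief's identity and Parseval's formula give `Z_n(r) / (2π)ⁿ = det (1 + B B*)`, where `B` is
formed by the first `n` rows of `m_{jl} r^(-j-l-1)`. This determinant lies between `1 + ‖B‖²` and
`exp ‖B‖²` for the Hilbert–Schmidt norm, so the limits exist and their limsup is finite if and only
if `m ∈ ℓ²`. It remains to compare `m ∈ ℓ²` with `∑ k l |a_{kl}|² < ∞`.

Suppose the weighted sum is finite. When it is small, an inequality of Lebedev–Milin type bounds
`|∑ λ_p (exp (-A(p) / 2) - 1)|²` by `∑ λ_p conj λ_q (exp L(p, q) - 1)` for points `p = (x, y)` and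
`q = (u, v)` of the bidisk, where `L(p, q) = ∑ₖ (xᵏ - yᵏ) conj (uᵏ - vᵏ) / k`. As
`exp L(p, q) - 1` is `(y - x) conj (v - u)` times the reproducing kernel of `ℓ²(ℕ × ℕ)`, this says
that `(exp (-A / 2) - 1) / (y - x)` comes from a bounded functional, that is, `m ∈ ℓ²`. In general
the tail of the Grunsky array is small, and the finitely many remaining terms are added in small
steps, each of which multiplies `exp (-A / 2)` by the exponential of a polynomial.

Conversely `exp (-A) = 1 - (y - x)² ∂ₓ∂_y F`, so that `G = ∂ₓ∂_y F` and the power series `m` satisfy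
`(x - y) (G + m²) = 2 m`. A discrete Poincaré inequality along antidiagonals turns `m ∈ ℓ²` into
`∑ |(G + m²)_{ij}|² / ((i + 1) (j + 1)) < ∞`, the Cauchy–Schwarz inequality gives the same bound for
`m²`, and therefore for `G`, whose coefficients are `(i + 1) (j + 1) a_{i+1, j+1}`.
-/

section

open Finset.HasAntidiagonal (antidiagonal mem_antidiagonal)

/-! ### Double power series on the bidisk -/

/-- Absolute convergence of the double power series `∑ t (i, j) xⁱ yʲ` on the open unit bidisk.
By monotonicity it is enough to test equal radii `|x| = |y| = ρ`. -/
def BidiskSummable (t : ℕ × ℕ → ℂ) : Prop :=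
  ∀ ρ : ℝ, 0 ≤ ρ → ρ < 1 → Summable fun p : ℕ × ℕ => ‖t p‖ * ρ ^ (p.1 + p.2)

/-- The sum `∑ t (i, j) xⁱ yʲ` of a double power series. -/
noncomputable def bidiskSum (t : ℕ × ℕ → ℂ) (x y : ℂ) : ℂ :=
  ∑' p : ℕ × ℕ, t p * x ^ p.1 * y ^ p.2

/-- The coefficients of `x` times a double power series. -/
def shiftFst (t : ℕ × ℕ → ℂ) : ℕ × ℕ → ℂ
  | (0, _) => 0
  | (i + 1, j) => t (i, j)

/-- The coefficients of `y` times a double power series. -/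
def shiftSnd (t : ℕ × ℕ → ℂ) : ℕ × ℕ → ℂ :=
  shiftFst (t ∘ Prod.swap) ∘ Prod.swap

/-- The coefficients of the `x`-derivative of a double power series. -/
def derivFst (t : ℕ × ℕ → ℂ) : ℕ × ℕ → ℂ :=
  fun p => ((p.1 + 1 : ℕ) : ℂ) * t (p.1 + 1, p.2)

/-- The coefficients of the `y`-derivative of a double power series. -/
def derivSnd (t : ℕ × ℕ → ℂ) : ℕ × ℕ → ℂ :=
  derivFst (t ∘ Prod.swap) ∘ Prod.swap

theorem succ_fst_injective : Function.Injective fun p : ℕ × ℕ => (p.1 + 1, p.2) :=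
  (add_left_injective 1).prodMap Function.injective_id

theorem fst_eq_zero_of_notMem_range_succ_fst {p : ℕ × ℕ}
    (hp : p ∉ Set.range fun p : ℕ × ℕ => (p.1 + 1, p.2)) : p.1 = 0 := by
  obtain ⟨_ | i, j⟩ := p
  · rfl
  · exact absurd ⟨(i, j), rfl⟩ hp

theorem summable_succ_fst_iff {E : Type*} [AddCommMonoid E] [TopologicalSpace E]
    {f : ℕ × ℕ → E} (hf : ∀ j, f (0, j) = 0) :
    Summable (fun p : ℕ × ℕ => f (p.1 + 1, p.2)) ↔ Summable f := by
  refine succ_fst_injective.summable_iff fun p hp => ?_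
  rw [← hf p.2, ← fst_eq_zero_of_notMem_range_succ_fst hp]

theorem tsum_succ_fst {E : Type*} [AddCommMonoid E] [TopologicalSpace E]
    {f : ℕ × ℕ → E} (hf : ∀ j, f (0, j) = 0) :
    ∑' p : ℕ × ℕ, f (p.1 + 1, p.2) = ∑' p, f p := by
  refine succ_fst_injective.tsum_eq fun p hp => ?_
  by_contra h
  exact hp (by rw [← hf p.2, ← fst_eq_zero_of_notMem_range_succ_fst h])

theorem exists_nat_mul_pow_pred_le {ρ σ : ℝ} (hρ : 0 < ρ) (hσ : ρ < σ) :
    ∃ C : ℝ, ∀ i : ℕ, i * ρ ^ (i - 1) ≤ C * σ ^ i := by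
  have hO := (isLittleO_pow_const_mul_const_pow_const_pow_of_norm_lt 1
    (show ‖ρ‖ < σ by rwa [Real.norm_of_nonneg hρ.le])).isBigO
  obtain ⟨C, -, hC⟩ := Asymptotics.bound_of_isBigO_nat_atTop hO
  refine ⟨C / ρ, fun i => ?_⟩
  have hi := hC (x := i) (pow_ne_zero i (hρ.trans hσ).ne')
  rw [pow_one, Real.norm_of_nonneg (by positivity),
    Real.norm_of_nonneg (pow_nonneg (hρ.trans hσ).le i)] at hi
  rw [div_mul_eq_mul_div, le_div_iff₀ hρ]
  cases i with
  | zero => simpa using hi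
  | succ i => simpa [pow_succ, mul_assoc] using hi

theorem bidiskSum_swap (t : ℕ × ℕ → ℂ) (x y : ℂ) :
    bidiskSum (t ∘ Prod.swap) x y = bidiskSum t y x := by
  rw [bidiskSum, bidiskSum, ← (Equiv.prodComm ℕ ℕ).tsum_eq]
  exact tsum_congr fun p => mul_right_comm _ _ _

theorem bidiskSum_smul (c : ℂ) (t : ℕ × ℕ → ℂ) (x y : ℂ) :
    bidiskSum (c • t) x y = c * bidiskSum t x y := by
  simp only [bidiskSum, Pi.smul_apply, smul_eq_mul, mul_assoc, tsum_mul_left]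

theorem bidiskSum_shiftFst (t : ℕ × ℕ → ℂ) (x y : ℂ) :
    bidiskSum (shiftFst t) x y = x * bidiskSum t x y := by
  rw [bidiskSum, bidiskSum, ← tsum_succ_fst fun j => by simp [shiftFst], ← tsum_mul_left]
  exact tsum_congr fun p => by simp only [shiftFst]; ring

theorem bidiskSum_shiftSnd (t : ℕ × ℕ → ℂ) (x y : ℂ) :
    bidiskSum (shiftSnd t) x y = y * bidiskSum t x y := by
  rw [shiftSnd, bidiskSum_swap, bidiskSum_shiftFst, bidiskSum_swap]

theorem bidiskSum_derivFst (t : ℕ × ℕ → ℂ) (x y : ℂ) :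
    bidiskSum (derivFst t) x y = ∑' p : ℕ × ℕ, t p * (p.1 * x ^ (p.1 - 1)) * y ^ p.2 := by
  rw [← tsum_succ_fst (f := fun p => t p * (p.1 * x ^ (p.1 - 1)) * y ^ p.2) fun j => by simp]
  exact tsum_congr fun p => by simp only [derivFst, Nat.add_sub_cancel]; ring

namespace BidiskSummable

variable {s t : ℕ × ℕ → ℂ} {x y : ℂ}

theorem of_summable_pos
    (h : ∀ ρ : ℝ, 0 < ρ → ρ < 1 → Summable fun p : ℕ × ℕ => ‖t p‖ * ρ ^ (p.1 + p.2)) :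
    BidiskSummable t := by
  intro ρ h0 h1
  refine .of_nonneg_of_le (fun _ => by positivity) (fun p => ?_)
    (h (max ρ (1 / 2)) (by positivity) (max_lt h1 (by norm_num)))
  gcongr
  exact le_max_left _ _

theorem of_norm_le {C : ℝ} (h : ∀ p, ‖t p‖ ≤ C) : BidiskSummable t := by
  intro ρ h0 h1
  have hgeom := summable_geometric_of_lt_one h0 h1
  refine .of_nonneg_of_le (fun _ => by positivity) (fun p => ?_)
    ((hgeom.mul_of_nonneg hgeom (fun _ => pow_nonneg h0 _) fun _ => pow_nonneg h0 _).mul_left C)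
  rw [pow_add]
  gcongr
  exact h p

theorem summable_norm (ht : BidiskSummable t) (hx : ‖x‖ < 1) (hy : ‖y‖ < 1) :
    Summable fun p : ℕ × ℕ => ‖t p * x ^ p.1 * y ^ p.2‖ := by
  refine .of_nonneg_of_le (fun _ => norm_nonneg _) (fun p => ?_)
    (ht (max ‖x‖ ‖y‖) (le_max_of_le_left (norm_nonneg _)) (max_lt hx hy))
  rw [norm_mul, norm_mul, norm_pow, norm_pow, pow_add, mul_assoc]
  gcongr
  · exact le_max_left _ _
  · exact le_max_right _ _

theorem summable (ht : BidiskSummable t) (hx : ‖x‖ < 1) (hy : ‖y‖ < 1) :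
    Summable fun p : ℕ × ℕ => t p * x ^ p.1 * y ^ p.2 :=
  (ht.summable_norm hx hy).of_norm

theorem add (hs : BidiskSummable s) (ht : BidiskSummable t) : BidiskSummable (s + t) := by
  intro ρ h0 h1
  refine .of_nonneg_of_le (fun _ => by positivity) (fun p => ?_) ((hs ρ h0 h1).add (ht ρ h0 h1))
  rw [← add_mul]
  gcongr
  exact norm_add_le _ _

theorem smul (ht : BidiskSummable t) (c : ℂ) : BidiskSummable (c • t) := fun ρ h0 h1 =>
  ((ht ρ h0 h1).mul_left ‖c‖).congr fun p => by rw [Pi.smul_apply, norm_smul, mul_assoc]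

theorem swap (ht : BidiskSummable t) : BidiskSummable (t ∘ Prod.swap) := fun ρ h0 h1 =>
  ((Equiv.prodComm ℕ ℕ).summable_iff.mpr (ht ρ h0 h1)).congr fun p => by
    simp [add_comm]

theorem shiftFst (ht : BidiskSummable t) : BidiskSummable (shiftFst t) := by
  intro ρ h0 h1
  rw [← summable_succ_fst_iff fun j => by simp [_root_.shiftFst]]
  exact ((ht ρ h0 h1).mul_left ρ).congr fun p => by simp only [_root_.shiftFst]; ring

theorem shiftSnd (ht : BidiskSummable t) : BidiskSummable (shiftSnd t) :=
  ht.swap.shiftFst.swap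

theorem summable_norm_mul_nat (ht : BidiskSummable t) {ρ : ℝ} (h0 : 0 < ρ) (h1 : ρ < 1) :
    Summable fun p : ℕ × ℕ => ‖t p‖ * (p.1 * ρ ^ (p.1 - 1)) * ρ ^ p.2 := by
  obtain ⟨σ, hρσ, hσ1⟩ := exists_between h1
  obtain ⟨C, hC⟩ := exists_nat_mul_pow_pred_le h0 hρσ
  refine .of_nonneg_of_le (fun _ => by positivity) (fun p => ?_)
    ((ht σ (h0.trans hρσ).le hσ1).mul_left C)
  have hC0 : 0 ≤ C * σ ^ p.1 := le_trans (by positivity) (hC p.1)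
  calc ‖t p‖ * (p.1 * ρ ^ (p.1 - 1)) * ρ ^ p.2
      ≤ ‖t p‖ * (C * σ ^ p.1) * σ ^ p.2 :=
        mul_le_mul (mul_le_mul_of_nonneg_left (hC p.1) (norm_nonneg _))
          (pow_le_pow_left₀ h0.le hρσ.le _) (by positivity) (by positivity)
    _ = C * (‖t p‖ * σ ^ (p.1 + p.2)) := by ring

theorem derivFst (ht : BidiskSummable t) : BidiskSummable (derivFst t) := by
  refine of_summable_pos fun ρ h0 h1 => ?_
  refine ((summable_succ_fst_iff fun j => by simp).mpr (ht.summable_norm_mul_nat h0 h1)).congr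
    fun p => ?_
  rw [_root_.derivFst, norm_mul, Complex.norm_natCast, Nat.add_sub_cancel]
  ring

theorem derivSnd (ht : BidiskSummable t) : BidiskSummable (derivSnd t) :=
  ht.swap.derivFst.swap

theorem bidiskSum_add (hs : BidiskSummable s) (ht : BidiskSummable t) (hx : ‖x‖ < 1)
    (hy : ‖y‖ < 1) : bidiskSum (s + t) x y = bidiskSum s x y + bidiskSum t x y := by
  simp only [bidiskSum, Pi.add_apply, add_mul]
  exact (hs.summable hx hy).tsum_add (ht.summable hx hy)

theorem hasDerivAt_fst (ht : BidiskSummable t) (hx : ‖x‖ < 1) (hy : ‖y‖ < 1) :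
    HasDerivAt (fun w => bidiskSum t w y) (bidiskSum (_root_.derivFst t) x y) x := by
  obtain ⟨R, hR, hR1⟩ := exists_between (max_lt hx hy)
  obtain ⟨hxR, hyR⟩ := max_lt_iff.mp hR
  have hx_mem : x ∈ Metric.ball (0 : ℂ) R := by simpa using hxR
  rw [bidiskSum_derivFst]
  refine hasDerivAt_tsum_of_isPreconnected
    (ht.summable_norm_mul_nat ((norm_nonneg x).trans_lt hxR) hR1) Metric.isOpen_ball
    (convex_ball _ _).isPreconnected
    (fun p w _ => ((hasDerivAt_pow p.1 w).const_mul (t p)).mul_const (y ^ p.2))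
    (fun p w hw => ?_) hx_mem (ht.summable hx hy) hx_mem
  rw [norm_mul, norm_mul, norm_mul, norm_pow, norm_pow, Complex.norm_natCast]
  have hR0 : 0 ≤ R := (norm_nonneg x).trans hxR.le
  have hwR : ‖w‖ ≤ R := (mem_ball_zero_iff.mp hw).le
  gcongr

theorem hasDerivAt_snd (ht : BidiskSummable t) (hx : ‖x‖ < 1) (hy : ‖y‖ < 1) :
    HasDerivAt (fun w => bidiskSum t x w) (bidiskSum (_root_.derivSnd t) x y) y := by
  have h := ht.swap.hasDerivAt_fst hy hx
  simp only [bidiskSum_swap] at h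
  rwa [_root_.derivSnd, bidiskSum_swap]

end BidiskSummable

instance instHasAntidiagonalNatProd : Finset.HasAntidiagonal (ℕ × ℕ) where
  antidiagonal := Finset.HasAntidiagonal.antidiagonalOfLocallyFinite.antidiagonal
  mem_antidiagonal := Finset.HasAntidiagonal.antidiagonalOfLocallyFinite.mem_antidiagonal

theorem card_antidiagonal_nat_prod_le (n : ℕ × ℕ) :
    (antidiagonal n).card ≤ (n.1 + 1) * (n.2 + 1) := by
  calc (antidiagonal n).card
      ≤ (Finset.Iic n.1 ×ˢ Finset.Iic n.2).card := by
        refine Finset.card_le_card_of_injOn Prod.fst (fun q hq => ?_) fun q hq q' hq' h =>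
          (Finset.HasAntidiagonal.antidiagonal_congr hq hq').mpr h
        rw [Finset.Iic_product_Iic]
        exact Finset.mem_Iic.mpr (Finset.HasAntidiagonal.antidiagonal.fst_le hq)
    _ = (n.1 + 1) * (n.2 + 1) := by rw [Finset.card_product, Nat.card_Iic, Nat.card_Iic]

/-- The coefficients of the product of two double power series. -/
noncomputable def cauchyProd (s t : ℕ × ℕ → ℂ) : ℕ × ℕ → ℂ :=
  fun n => ∑ q ∈ antidiagonal n, s q.1 * t q.2

namespace BidiskSummable

variable {s t : ℕ × ℕ → ℂ} {x y : ℂ}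

theorem cauchyProd (hs : BidiskSummable s) (ht : BidiskSummable t) :
    BidiskSummable (cauchyProd s t) := by
  intro ρ h0 h1
  have h : Summable fun n : ℕ × ℕ => ∑ q ∈ antidiagonal n,
      ‖s q.1‖ * ρ ^ (q.1.1 + q.1.2) * (‖t q.2‖ * ρ ^ (q.2.1 + q.2.2)) :=
    summable_sum_mul_antidiagonal_of_summable_mul (A := ℕ × ℕ)
      (f := fun p => ‖s p‖ * ρ ^ (p.1 + p.2)) (g := fun p => ‖t p‖ * ρ ^ (p.1 + p.2))
      ((hs ρ h0 h1).mul_of_nonneg (ht ρ h0 h1) (fun p => by positivity) fun p => by positivity)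
  refine .of_nonneg_of_le (fun p => by positivity) (fun p => ?_) h
  calc ‖∑ q ∈ antidiagonal p, s q.1 * t q.2‖ * ρ ^ (p.1 + p.2)
      ≤ (∑ q ∈ antidiagonal p, ‖s q.1 * t q.2‖) * ρ ^ (p.1 + p.2) := by
        gcongr
        exact norm_sum_le _ _
    _ = _ := by
        rw [Finset.sum_mul]
        refine Finset.sum_congr rfl fun q hq => ?_
        rw [← mem_antidiagonal.mp hq, norm_mul, Prod.fst_add, Prod.snd_add]
        ring

theorem bidiskSum_cauchyProd (hs : BidiskSummable s) (ht : BidiskSummable t) (hx : ‖x‖ < 1)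
    (hy : ‖y‖ < 1) :
    bidiskSum (_root_.cauchyProd s t) x y = bidiskSum s x y * bidiskSum t x y := by
  have hs' := hs.summable_norm hx hy
  have ht' := ht.summable_norm hx hy
  have hst := summable_mul_of_summable_norm hs' ht'
  rw [bidiskSum, bidiskSum, bidiskSum, Summable.tsum_mul_tsum_eq_tsum_sum_antidiagonal
    (A := ℕ × ℕ) (f := fun p => s p * x ^ p.1 * y ^ p.2) (g := fun p => t p * x ^ p.1 * y ^ p.2)
    hs'.of_norm ht'.of_norm hst]
  refine tsum_congr fun p => ?_
  rw [_root_.cauchyProd, Finset.sum_mul, Finset.sum_mul]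
  refine Finset.sum_congr rfl fun q hq => ?_
  rw [← mem_antidiagonal.mp hq, Prod.fst_add, Prod.snd_add]
  ring

end BidiskSummable

theorem coeff_eq_zero_of_hasSum_zero {c : ℕ → ℂ} {ε : ℝ} (hε : 0 < ε)
    (h : ∀ x : ℂ, x ≠ 0 → ‖x‖ < ε → HasSum (fun k => c k * x ^ k) 0) : c = 0 := by
  set p := FormalMultilinearSeries.ofScalars ℂ c with hp
  have hp_sum (x : ℂ) : p.sum x = ∑' k, c k * x ^ k := by
    simp [hp, FormalMultilinearSeries.sum, mul_comm]
  have hp_radius : 0 < p.radius := by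
    have hε2 : 0 < ε / 2 := half_pos hε
    have hs := (h (ε / 2 : ℝ) (mod_cast hε2.ne') (by
      rw [Complex.norm_real, Real.norm_of_nonneg hε2.le]; exact half_lt_self hε)).summable.norm
    refine lt_of_lt_of_le ?_ (p.le_radius_of_summable_norm (r := (ε / 2).toNNReal)
      (hs.congr fun n => ?_))
    · simpa using hε
    · rw [hp, FormalMultilinearSeries.ofScalars_norm, norm_mul, norm_pow, Complex.norm_real,
        Real.norm_of_nonneg hε2.le, Real.coe_toNNReal _ hε2.le]
  have hp_series := (p.hasFPowerSeriesOnBall hp_radius).hasFPowerSeriesAt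
  have hp_zero : ∀ᶠ x in nhdsWithin (0 : ℂ) {0}ᶜ, p.sum x = 0 := by
    filter_upwards [mem_nhdsWithin_of_mem_nhds (Metric.ball_mem_nhds (0 : ℂ) hε),
      self_mem_nhdsWithin] with x hx hx0
    rw [hp_sum]
    exact (h x hx0 (mem_ball_zero_iff.mp hx)).tsum_eq
  have hp_nhds : p.sum =ᶠ[nhds 0] 0 :=
    hp_series.analyticAt.frequently_zero_iff_eventually_zero.mp hp_zero.frequently
  refine FormalMultilinearSeries.ofScalars_series_injective ℂ ℂ ?_
  rw [← hp, (hp_series.congr hp_nhds).eq_zero,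
    FormalMultilinearSeries.ofScalars_series_eq_zero_of_scalar_zero]

theorem BidiskSummable.summable_fst {t : ℕ × ℕ → ℂ} (ht : BidiskSummable t) {x : ℂ} (hx : ‖x‖ < 1)
    (l : ℕ) : Summable fun k => t (k, l) * x ^ k :=
  (summable_mul_right_iff (pow_ne_zero l (by norm_num : (1 / 2 : ℂ) ≠ 0))).mp
    ((ht.summable hx (by norm_num)).comp_injective (Prod.mk_left_injective l))

theorem BidiskSummable.eq_zero_of_bidiskSum_eq_zero {t : ℕ × ℕ → ℂ} (ht : BidiskSummable t)
    {ε : ℝ} (hε : 0 < ε) (hε1 : ε ≤ 1)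
    (h : ∀ x y : ℂ, x ≠ 0 → y ≠ 0 → x ≠ y → ‖x‖ < ε → ‖y‖ < ε → bidiskSum t x y = 0) :
    t = 0 := by
  have hcol_zero {x : ℂ} (hx0 : x ≠ 0) (hx : ‖x‖ < ε) :
      (fun l => ∑' k, t (k, l) * x ^ k) = 0 := by
    refine coeff_eq_zero_of_hasSum_zero (norm_pos_iff.mpr hx0) fun y hy0 hyx => ?_
    have hsum := (ht.summable (hx.trans_le hε1) (hyx.trans (hx.trans_le hε1))).hasSum
    change HasSum _ (bidiskSum t x y) at hsum
    rw [h x y hx0 hy0 (by rintro rfl; exact lt_irrefl _ hyx) hx (hyx.trans hx)] at hsum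
    exact ((Equiv.prodComm ℕ ℕ).hasSum_iff.mpr hsum).prod_fiberwise fun l =>
      (ht.summable_fst (hx.trans_le hε1) l).hasSum.mul_right (y ^ l)
  ext ⟨k, l⟩
  refine congr_fun (coeff_eq_zero_of_hasSum_zero (c := fun k => t (k, l)) hε
    fun x hx0 hx => ?_) k
  rw [show (0 : ℂ) = ∑' k, t (k, l) * x ^ k from (congr_fun (hcol_zero hx0 hx) l).symm]
  exact (ht.summable_fst (hx.trans_le hε1) l).hasSum

end

section

open scoped ComplexConjugate

/-! ### An exponential inequality for quadratic forms -/

section ExpInequality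

variable {ι κ : Type*} [Fintype ι] [Fintype κ]

/-- The squared norm of `∑ p, c p • (U p)^{⊗ n}` in the `n`-th tensor power of `ℂ^κ`, whose
coordinates are indexed by `Fin n → κ`. -/
noncomputable def tensorNormSq (c : ι → ℂ) (U : ι → κ → ℂ) (n : ℕ) : ℝ :=
  ∑ K : Fin n → κ, ‖∑ p, c p * ∏ i, U p (K i)‖ ^ 2

variable (c : ι → ℂ) (U : ι → κ → ℂ)

theorem tensorNormSq_nonneg (n : ℕ) : 0 ≤ tensorNormSq c U n :=
  Finset.sum_nonneg fun _ _ => sq_nonneg _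

theorem coe_tensorNormSq (n : ℕ) :
    (tensorNormSq c U n : ℂ) = ∑ p, ∑ q, c p * conj (c q) * (∑ k, U p k * conj (U q k)) ^ n := by
  have hterm (K : Fin n → κ) : ((‖∑ p, c p * ∏ i, U p (K i)‖ : ℝ) : ℂ) ^ 2
      = ∑ p, ∑ q, c p * conj (c q) * ∏ i, U p (K i) * conj (U q (K i)) := by
    rw [← Complex.mul_conj', map_sum, Finset.sum_mul_sum]
    refine Finset.sum_congr rfl fun p _ => Finset.sum_congr rfl fun q _ => ?_
    rw [map_mul, map_prod, Finset.prod_mul_distrib]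
    ring
  simp_rw [tensorNormSq, Complex.ofReal_sum, Complex.ofReal_pow, hterm, Fintype.sum_pow,
    Finset.mul_sum]
  rw [Finset.sum_comm]
  exact Finset.sum_congr rfl fun p _ => Finset.sum_comm

theorem tensorNormSq_prod (n : ℕ) :
    tensorNormSq c (fun p (k : κ × κ) => U p k.1 * U p k.2) n = tensorNormSq c U (2 * n) := by
  refine Complex.ofReal_injective ?_
  rw [coe_tensorNormSq, coe_tensorNormSq]
  refine Finset.sum_congr rfl fun p _ => Finset.sum_congr rfl fun q _ => ?_
  rw [pow_mul, sq (∑ k, _), Fintype.sum_mul_sum, Fintype.sum_prod_type]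
  simp only [map_mul, mul_mul_mul_comm]

theorem hasSum_exp_sub_one (z : ℂ) :
    HasSum (fun n : ℕ => z ^ (n + 1) / (n + 1).factorial) (Complex.exp z - 1) := by
  have h := NormedSpace.expSeries_div_hasSum_exp z
  rw [← Complex.exp_eq_exp_ℂ] at h
  simpa using (hasSum_nat_add_iff' 1).mpr h

theorem hasSum_tensorNormSq_div_factorial :
    HasSum (fun n : ℕ => tensorNormSq c U (n + 1) / (n + 1).factorial)
      (∑ p, ∑ q, c p * conj (c q) * (Complex.exp (∑ k, U p k * conj (U q k)) - 1)).re := by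
  have h := Complex.hasSum_re (hasSum_sum (s := Finset.univ) fun p _ =>
    hasSum_sum (s := Finset.univ) fun q _ =>
    (hasSum_exp_sub_one (∑ k, U p k * conj (U q k))).mul_left (c p * conj (c q)))
  refine h.congr_fun fun n => ?_
  rw [← Complex.ofReal_re (tensorNormSq c U (n + 1) / (n + 1).factorial), Complex.ofReal_div,
    coe_tensorNormSq, Complex.ofReal_natCast]
  simp only [Finset.sum_div, mul_div_assoc]

theorem norm_sum_quadratic_pow_sq_le (b : κ × κ → ℂ) (m : ℕ) :
    ‖∑ p, c p * (∑ k, b k * (U p k.1 * U p k.2)) ^ m‖ ^ 2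
      ≤ (∑ k, ‖b k‖ ^ 2) ^ m * tensorNormSq c U (2 * m) := by
  have hexpand : ∑ p, c p * (∑ k, b k * (U p k.1 * U p k.2)) ^ m
      = ∑ K : Fin m → κ × κ,
        (∏ i, b (K i)) * ∑ p, c p * ∏ i, U p (K i).1 * U p (K i).2 := by
    simp_rw [Fintype.sum_pow, Finset.mul_sum]
    rw [Finset.sum_comm]
    refine Finset.sum_congr rfl fun K _ => Finset.sum_congr rfl fun p _ => ?_
    rw [Finset.prod_mul_distrib, mul_left_comm]
  have hb : (∑ k, ‖b k‖ ^ 2) ^ m = ∑ K : Fin m → κ × κ, ‖∏ i, b (K i)‖ ^ 2 := by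
    simp only [Fintype.sum_pow, norm_prod, Finset.prod_pow]
  rw [hexpand, ← tensorNormSq_prod, hb]
  calc _ ≤ (∑ K : Fin m → κ × κ,
        ‖∏ i, b (K i)‖ * ‖∑ p, c p * ∏ i, U p (K i).1 * U p (K i).2‖) ^ 2 := by
        gcongr
        simpa only [norm_mul] using norm_sum_le (E := ℂ) Finset.univ fun K : Fin m → κ × κ =>
          (∏ i, b (K i)) * ∑ p, c p * ∏ i, U p (K i).1 * U p (K i).2
    _ ≤ _ := Finset.sum_mul_sq_le_sq_mul_sq _ _ _

theorem factorial_two_mul_le_four_pow_mul (m : ℕ) :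
    (2 * m).factorial ≤ 4 ^ m * m.factorial ^ 2 := by
  have h := Nat.choose_mul_factorial_mul_factorial (show m ≤ 2 * m by omega)
  rw [show 2 * m - m = m by omega] at h
  calc (2 * m).factorial = (2 * m).choose m * m.factorial ^ 2 := by rw [← h]; ring
    _ ≤ 2 ^ (2 * m) * m.factorial ^ 2 := Nat.mul_le_mul_right _ (Nat.choose_le_two_pow _ _)
    _ = 4 ^ m * m.factorial ^ 2 := by rw [pow_mul]; norm_num

theorem norm_sum_quadratic_pow_le {b : κ × κ → ℂ} (hb : ∑ k, ‖b k‖ ^ 2 ≤ 1 / 4) (m : ℕ) :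
    ‖∑ p, c p * (∑ k, b k * (U p k.1 * U p k.2)) ^ (m + 1)‖
      ≤ (m + 1).factorial *
        √(∑ p, ∑ q, c p * conj (c q) * (Complex.exp (∑ k, U p k * conj (U q k)) - 1)).re := by
  have hQ := hasSum_tensorNormSq_div_factorial c U
  set Q := (∑ p, ∑ q, c p * conj (c q) * (Complex.exp (∑ k, U p k * conj (U q k)) - 1)).re
  have hterm_nonneg (n : ℕ) : 0 ≤ tensorNormSq c U (n + 1) / (n + 1).factorial :=
    div_nonneg (tensorNormSq_nonneg c U _) (Nat.cast_nonneg _)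
  have hQ0 : 0 ≤ Q := hQ.nonneg hterm_nonneg
  have hT : tensorNormSq c U (2 * (m + 1)) ≤ (2 * (m + 1)).factorial * Q := by
    have h := le_hasSum hQ (2 * m + 1) fun j _ => hterm_nonneg j
    rwa [div_le_iff₀ (by positivity), mul_comm Q] at h
  refine le_of_sq_le_sq ?_ (by positivity)
  calc _ ≤ (∑ k, ‖b k‖ ^ 2) ^ (m + 1) * tensorNormSq c U (2 * (m + 1)) :=
        norm_sum_quadratic_pow_sq_le c U b (m + 1)
    _ ≤ (1 / 4) ^ (m + 1) * (4 ^ (m + 1) * (m + 1).factorial ^ 2 * Q) := by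
        gcongr
        · exact tensorNormSq_nonneg c U _
        · refine hT.trans ?_
          gcongr
          exact_mod_cast factorial_two_mul_le_four_pow_mul (m + 1)
    _ = ((m + 1).factorial * √Q) ^ 2 := by
        rw [mul_pow, Real.sq_sqrt hQ0, one_div, inv_pow]
        field_simp

theorem norm_sum_exp_quadratic_sub_one_sq_le {b : κ × κ → ℂ} (hb : ∑ k, ‖b k‖ ^ 2 ≤ 1 / 4) :
    ‖∑ p, c p * (Complex.exp (-(1 / 2) * ∑ k, b k * (U p k.1 * U p k.2)) - 1)‖ ^ 2
      ≤ (∑ p, ∑ q, c p * conj (c q)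
          * (Complex.exp (∑ k, U p k * conj (U q k)) - 1)).re := by
  have hpow := norm_sum_quadratic_pow_le c U hb
  have hQ0 : 0 ≤ (∑ p, ∑ q, c p * conj (c q)
      * (Complex.exp (∑ k, U p k * conj (U q k)) - 1)).re :=
    (hasSum_tensorNormSq_div_factorial c U).nonneg fun n =>
      div_nonneg (tensorNormSq_nonneg c U _) (Nat.cast_nonneg _)
  set Q := (∑ p, ∑ q, c p * conj (c q) * (Complex.exp (∑ k, U p k * conj (U q k)) - 1)).re
  set A : ι → ℂ := fun p => ∑ k, b k * (U p k.1 * U p k.2)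
  have hsum : HasSum (fun m : ℕ => ∑ p, c p * ((-(1 / 2) * A p) ^ (m + 1) / (m + 1).factorial))
      (∑ p, c p * (Complex.exp (-(1 / 2) * A p) - 1)) :=
    hasSum_sum fun p _ => (hasSum_exp_sub_one _).mul_left _
  have hgeom : HasSum (fun m : ℕ => √Q * (1 / 2 / 2 ^ m)) (√Q) := by
    simpa using (hasSum_geometric_two' (1 : ℝ)).mul_left (√Q)
  refine (pow_le_pow_left₀ (norm_nonneg _) (hsum.norm_le_of_bounded hgeom fun m => ?_) 2).trans_eq
    (Real.sq_sqrt hQ0)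
  have hfactor : ∑ p, c p * ((-(1 / 2) * A p) ^ (m + 1) / (m + 1).factorial)
      = ((-(1 / 2)) ^ (m + 1) / (m + 1).factorial) * ∑ p, c p * A p ^ (m + 1) := by
    rw [Finset.mul_sum]
    exact Finset.sum_congr rfl fun p _ => by rw [mul_pow]; ring
  rw [hfactor, norm_mul, norm_div, norm_pow, norm_neg, Complex.norm_natCast,
    show ‖(1 / 2 : ℂ)‖ = 1 / 2 by norm_num]
  calc _ ≤ (1 / 2) ^ (m + 1) / (m + 1).factorial * ((m + 1).factorial * √Q) := by
        gcongr
        exact hpow m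
    _ = √Q * (1 / 2 / 2 ^ m) := by
        rw [div_pow, one_pow, pow_succ]
        field_simp

end ExpInequality

theorem norm_sum_exp_quadratic_sub_one_sq_le_of_hasSum {ι κ : Type*} [Fintype ι] (c : ι → ℂ)
    {U : ι → κ → ℂ} {b : κ × κ → ℂ} {A : ι → ℂ} {L : ι → ι → ℂ}
    (hA : ∀ p, HasSum (fun k => b k * (U p k.1 * U p k.2)) (A p))
    (hL : ∀ p q, HasSum (fun k => U p k * conj (U q k)) (L p q))
    (hb : Summable fun k => ‖b k‖ ^ 2) (hb4 : ∑' k, ‖b k‖ ^ 2 ≤ 1 / 4) :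
    ‖∑ p, c p * (Complex.exp (-(1 / 2) * A p) - 1)‖ ^ 2
      ≤ (∑ p, ∑ q, c p * conj (c q) * (Complex.exp (L p q) - 1)).re := by
  have hsquare : Tendsto (fun s : Finset κ => s ×ˢ s) atTop atTop :=
    tendsto_finsetProd_atTop.comp tendsto_atTop_diagonal
  have hsum_prod (f : κ × κ → ℂ) (s : Finset κ) :
      ∑ k : s × s, f (k.1, k.2) = ∑ k ∈ s ×ˢ s, f k := by
    rw [Fintype.sum_prod_type, Finset.sum_product, ← Finset.sum_coe_sort s]
    exact Finset.sum_congr rfl fun k _ => Finset.sum_coe_sort s fun l => f (k, l)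
  have hb_trunc (s : Finset κ) : ∑ k : s × s, ‖b (k.1, k.2)‖ ^ 2 ≤ 1 / 4 := by
    rw [← tsum_fintype (L := .unconditional _)]
    exact (tsum_comp_le_tsum_of_inj hb (fun _ => sq_nonneg _)
      (Subtype.val_injective.prodMap Subtype.val_injective)).trans hb4
  refine le_of_tendsto_of_tendsto' (b := atTop) ?_ ?_ fun s : Finset κ =>
    norm_sum_exp_quadratic_sub_one_sq_le c (fun p (k : s) => U p k) (hb_trunc s)
  · refine (tendsto_finsetSum _ fun p _ => ((Complex.continuous_exp.tendsto _).comp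
      (Tendsto.const_mul _ ?_)).sub_const 1 |>.const_mul _).norm.pow 2
    exact ((hA p).comp hsquare).congr fun s =>
      (hsum_prod (fun k => b k * (U p k.1 * U p k.2)) s).symm
  · refine (Complex.continuous_re.tendsto _).comp (tendsto_finsetSum _ fun p _ =>
      tendsto_finsetSum _ fun q _ => ((Complex.continuous_exp.tendsto _).comp ?_).sub_const 1
        |>.const_mul _)
    exact (hL p q).congr fun s => (Finset.sum_coe_sort s fun k => U p k * conj (U q k)).symm

end

section

open scoped ComplexConjugate

/-! ### The difference form and the bidisk kernel -/

/-- The quadratic form `∑ α (i, j) (x^{i+1} - y^{i+1}) (x^{j+1} - y^{j+1})`. For the Grunsky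
coefficients `α (i, j) = a_{i+1,j+1}` it equals `F (x, x) + F (y, y) - 2 F (x, y)`, where
`F (x, y) = ∑ a_{kl} x^k y^l`. -/
noncomputable def differenceForm (α : ℕ × ℕ → ℂ) (x y : ℂ) : ℂ :=
  ∑' p : ℕ × ℕ, α p * ((x ^ (p.1 + 1) - y ^ (p.1 + 1)) * (x ^ (p.2 + 1) - y ^ (p.2 + 1)))

/-- The summand `k l |a_{kl}|²` of the Weil–Petersson condition, at `(k, l) = (i + 1, j + 1)`. -/
noncomputable def grunskyWeight (α : ℕ × ℕ → ℂ) (p : ℕ × ℕ) : ℝ :=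
  ((p.1 : ℝ) + 1) * ((p.2 : ℝ) + 1) * ‖α p‖ ^ 2

/-- The open unit bidisk. -/
abbrev OpenBidisk := {q : ℂ × ℂ // ‖q.1‖ < 1 ∧ ‖q.2‖ < 1}

theorem BidiskSummable.hasSum_differenceForm {α : ℕ × ℕ → ℂ} (hα : BidiskSummable α) {x y : ℂ}
    (hx : ‖x‖ < 1) (hy : ‖y‖ < 1) :
    HasSum (fun p : ℕ × ℕ =>
        α p * ((x ^ (p.1 + 1) - y ^ (p.1 + 1)) * (x ^ (p.2 + 1) - y ^ (p.2 + 1))))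
      (x * x * bidiskSum α x x + y * y * bidiskSum α y y - x * y * bidiskSum α x y
        - y * x * bidiskSum α y x) := by
  refine (((((hα.summable hx hx).hasSum.mul_left (x * x)).add
    ((hα.summable hy hy).hasSum.mul_left (y * y))).sub
    ((hα.summable hx hy).hasSum.mul_left (x * y))).sub
    ((hα.summable hy hx).hasSum.mul_left (y * x))).congr_fun fun p => ?_
  ring

theorem BidiskSummable.differenceForm_eq {α : ℕ × ℕ → ℂ} (hα : BidiskSummable α) {x y : ℂ}
    (hx : ‖x‖ < 1) (hy : ‖y‖ < 1) :
    differenceForm α x y = x * x * bidiskSum α x x + y * y * bidiskSum α y y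
      - x * y * bidiskSum α x y - y * x * bidiskSum α y x :=
  (hα.hasSum_differenceForm hx hy).tsum_eq

theorem differenceForm_add {α β : ℕ × ℕ → ℂ} (hα : BidiskSummable α) (hβ : BidiskSummable β)
    {x y : ℂ} (hx : ‖x‖ < 1) (hy : ‖y‖ < 1) :
    differenceForm (α + β) x y = differenceForm α x y + differenceForm β x y := by
  rw [differenceForm, differenceForm, differenceForm,
    ← (hα.hasSum_differenceForm hx hy).summable.tsum_add (hβ.hasSum_differenceForm hx hy).summable]
  exact tsum_congr fun p => add_mul _ _ _

theorem grunskyWeight_nonneg (α : ℕ × ℕ → ℂ) (p : ℕ × ℕ) : 0 ≤ grunskyWeight α p := by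
  unfold grunskyWeight
  positivity

theorem grunskyWeight_smul (c : ℂ) (α : ℕ × ℕ → ℂ) (p : ℕ × ℕ) :
    grunskyWeight (c • α) p = ‖c‖ ^ 2 * grunskyWeight α p := by
  simp only [grunskyWeight, Pi.smul_apply, norm_smul]
  ring

theorem grunskyWeight_indicator (s : Set (ℕ × ℕ)) (α : ℕ × ℕ → ℂ) :
    grunskyWeight (s.indicator α) = s.indicator (grunskyWeight α) := by
  ext p
  by_cases hp : p ∈ s <;> simp [grunskyWeight, hp]

theorem BidiskSummable.of_summable_norm_sq {t : ℕ × ℕ → ℂ} (ht : Summable fun p => ‖t p‖ ^ 2) :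
    BidiskSummable t := by
  refine .of_norm_le (C := √(∑' p, ‖t p‖ ^ 2)) fun p => Real.le_sqrt_of_sq_le ?_
  exact ht.le_tsum p fun _ _ => sq_nonneg _

theorem BidiskSummable.of_summable_grunskyWeight {α : ℕ × ℕ → ℂ}
    (hα : Summable (grunskyWeight α)) : BidiskSummable α := by
  refine .of_summable_norm_sq (.of_nonneg_of_le (fun _ => sq_nonneg _) (fun p => ?_) hα)
  refine le_mul_of_one_le_left (sq_nonneg _) ?_
  exact_mod_cast Nat.mul_pos p.1.succ_pos p.2.succ_pos

theorem hasSum_neg_log_one_sub {z : ℂ} (hz : ‖z‖ < 1) :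
    HasSum (fun k : ℕ => z ^ (k + 1) / ((k : ℂ) + 1)) (-Complex.log (1 - z)) := by
  simpa using (hasSum_nat_add_iff' 1).mpr (Complex.hasSum_taylorSeries_neg_log hz)

theorem one_sub_ne_zero_of_norm_lt_one {z : ℂ} (hz : ‖z‖ < 1) : 1 - z ≠ 0 := by
  rw [sub_ne_zero]
  rintro rfl
  simp at hz

theorem norm_mul_conj_lt_one {x y : ℂ} (hx : ‖x‖ < 1) (hy : ‖y‖ < 1) : ‖x * conj y‖ < 1 := by
  rw [norm_mul, RCLike.norm_conj]
  exact mul_lt_one_of_nonneg_of_lt_one_left (norm_nonneg _) hx hy.le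

theorem exists_hasSum_difference_mul_conj_div (q q' : OpenBidisk) :
    ∃ L : ℂ, HasSum (fun k : ℕ => (q.1.1 ^ (k + 1) - q.1.2 ^ (k + 1)) *
        conj (q'.1.1 ^ (k + 1) - q'.1.2 ^ (k + 1)) / ((k : ℂ) + 1)) L ∧
      Complex.exp L - 1 = ((q.1.2 - q.1.1) * conj (q'.1.2 - q'.1.1)) *
        ((1 - q.1.1 * conj q'.1.1)⁻¹ * (1 - q.1.2 * conj q'.1.2)⁻¹) := by
  have h₁₁ := norm_mul_conj_lt_one q.2.1 q'.2.1
  have h₁₂ := norm_mul_conj_lt_one q.2.1 q'.2.2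
  have h₂₁ := norm_mul_conj_lt_one q.2.2 q'.2.1
  have h₂₂ := norm_mul_conj_lt_one q.2.2 q'.2.2
  have hL := (((hasSum_neg_log_one_sub h₁₁).add (hasSum_neg_log_one_sub h₂₂)).sub
    (hasSum_neg_log_one_sub h₁₂)).sub (hasSum_neg_log_one_sub h₂₁)
  refine ⟨_, hL.congr_fun fun k => ?_, ?_⟩
  · simp only [map_sub, map_pow]
    ring
  · have hne₁₁ := one_sub_ne_zero_of_norm_lt_one h₁₁
    have hne₁₂ := one_sub_ne_zero_of_norm_lt_one h₁₂
    have hne₂₁ := one_sub_ne_zero_of_norm_lt_one h₂₁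
    have hne₂₂ := one_sub_ne_zero_of_norm_lt_one h₂₂
    simp only [Complex.exp_sub, Complex.exp_add, Complex.exp_neg, Complex.exp_log hne₁₁,
      Complex.exp_log hne₁₂, Complex.exp_log hne₂₁, Complex.exp_log hne₂₂]
    field_simp
    rw [map_sub]
    ring

theorem norm_sum_exp_differenceForm_sub_one_sq_le {ι : Type*} [Fintype ι] (c : ι → ℂ)
    (P : ι → OpenBidisk) {α : ℕ × ℕ → ℂ} (hα : Summable (grunskyWeight α))
    (hα4 : ∑' p, grunskyWeight α p ≤ 1 / 4) :
    ‖∑ p, c p * (Complex.exp (-(1 / 2) * differenceForm α (P p).1.1 (P p).1.2) - 1)‖ ^ 2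
      ≤ (∑ p, ∑ q, c p * conj (c q) *
        (((P p).1.2 - (P p).1.1) * conj ((P q).1.2 - (P q).1.1) *
        ((1 - (P p).1.1 * conj (P q).1.1)⁻¹ * (1 - (P p).1.2 * conj (P q).1.2)⁻¹))).re := by
  choose L hL hexpL using fun p q => exists_hasSum_difference_mul_conj_div (P p) (P q)
  simp_rw [← hexpL]
  set w : ℕ → ℝ := fun k => √((k : ℝ) + 1)
  have hw_sq (k : ℕ) : w k ^ 2 = (k : ℝ) + 1 := Real.sq_sqrt (by positivity)
  have hw_ne (k : ℕ) : (w k : ℂ) ≠ 0 :=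
    Complex.ofReal_ne_zero.mpr (Real.sqrt_pos.mpr (by positivity)).ne'
  have hweight : (fun k : ℕ × ℕ => ‖(w k.1 : ℂ) * w k.2 * α k‖ ^ 2) = grunskyWeight α := by
    ext k
    simp only [norm_mul, Complex.norm_real, Real.norm_eq_abs, mul_pow, sq_abs, hw_sq,
      grunskyWeight]
  refine norm_sum_exp_quadratic_sub_one_sq_le_of_hasSum c
    (U := fun p k => ((P p).1.1 ^ (k + 1) - (P p).1.2 ^ (k + 1)) / w k)
    (b := fun k => w k.1 * w k.2 * α k) (fun p => ?_) (fun p q => (hL p q).congr_fun fun k => ?_)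
    (hweight ▸ hα) (hweight ▸ hα4)
  · have hform := (BidiskSummable.of_summable_grunskyWeight hα).hasSum_differenceForm
      (P p).2.1 (P p).2.2
    refine hform.summable.hasSum.congr_fun fun k => ?_
    have := hw_ne k.1
    have := hw_ne k.2
    field_simp
  · have hw_sq' : (w k : ℂ) * w k = (k : ℂ) + 1 := by
      rw [← sq]
      exact_mod_cast congrArg Complex.ofReal (hw_sq k)
    rw [map_div₀, Complex.conj_ofReal, div_mul_div_comm, hw_sq']

theorem memℓp_two_iff_summable_norm_sq {ι : Type*} {E : ι → Type*}
    [∀ i, NormedAddCommGroup (E i)] {f : ∀ i, E i} :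
    Memℓp f 2 ↔ Summable fun i => ‖f i‖ ^ 2 := by
  rw [memℓp_gen_iff (by norm_num)]
  norm_num

theorem memℓp_bidisk_monomials (q : OpenBidisk) :
    Memℓp (E := fun _ : ℕ × ℕ => ℂ) (fun p : ℕ × ℕ => q.1.1 ^ p.1 * q.1.2 ^ p.2) 2 := by
  have hgeom {z : ℂ} (hz : ‖z‖ < 1) : Summable fun i : ℕ => (‖z‖ ^ 2) ^ i :=
    summable_geometric_of_lt_one (sq_nonneg _) (pow_lt_one₀ (norm_nonneg _) hz two_ne_zero)
  rw [memℓp_two_iff_summable_norm_sq]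
  refine ((hgeom q.2.1).mul_of_nonneg (hgeom q.2.2) (fun _ => by positivity)
    fun _ => by positivity).congr fun p => ?_
  rw [norm_mul, norm_pow, norm_pow]
  ring

/-- The vector `(xⁱ yʲ)` of `ℓ²(ℕ × ℕ)`: pairing with it evaluates the double power series with
square summable coefficients at the point `(x, y)` of the bidisk. -/
noncomputable def bidiskKernel (q : OpenBidisk) : lp (fun _ : ℕ × ℕ => ℂ) 2 :=
  ⟨_, memℓp_bidisk_monomials q⟩

theorem bidiskKernel_apply (q : OpenBidisk) (p : ℕ × ℕ) :
    bidiskKernel q p = q.1.1 ^ p.1 * q.1.2 ^ p.2 := rfl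

theorem inner_bidiskKernel (q q' : OpenBidisk) : inner ℂ (bidiskKernel q') (bidiskKernel q)
    = (1 - q.1.1 * conj q'.1.1)⁻¹ * (1 - q.1.2 * conj q'.1.2)⁻¹ := by
  have h₁ := norm_mul_conj_lt_one q.2.1 q'.2.1
  have h₂ := norm_mul_conj_lt_one q.2.2 q'.2.2
  rw [lp.inner_eq_tsum, ← tsum_geometric_of_norm_lt_one h₁, ← tsum_geometric_of_norm_lt_one h₂,
    tsum_mul_tsum_of_summable_norm
      (summable_norm_geometric_of_norm_lt_one h₁) (summable_norm_geometric_of_norm_lt_one h₂)]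
  refine tsum_congr fun p => ?_
  simp only [bidiskKernel_apply, RCLike.inner_apply, map_mul, map_pow]
  ring

theorem exists_continuousLinearMap_comp_eq {𝕜 V H : Type*} [RCLike 𝕜] [AddCommGroup V]
    [Module 𝕜 V] [NormedAddCommGroup H] [NormedSpace 𝕜 H] (Φ : V →ₗ[𝕜] H) (Ψ : V →ₗ[𝕜] 𝕜)
    (h : ∀ v, ‖Ψ v‖ ≤ ‖Φ v‖) : ∃ l : H →L[𝕜] 𝕜, ∀ v, l (Φ v) = Ψ v := by
  obtain ⟨g, hg⟩ := Φ.rangeRestrict.exists_rightInverse_of_surjective Φ.range_rangeRestrict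
  have hΦg (w : LinearMap.range Φ) : Φ (g w) = w := congrArg Subtype.val (LinearMap.congr_fun hg w)
  have hΨ_eq {v w : V} (hvw : Φ v = Φ w) : Ψ v = Ψ w := by
    have h0 := h (v - w)
    rwa [map_sub, map_sub, hvw, sub_self, norm_zero, norm_le_zero_iff, sub_eq_zero] at h0
  obtain ⟨l, hl, -⟩ := exists_extension_norm_eq (LinearMap.range Φ)
    ((Ψ.comp g).mkContinuous 1 fun w => (h (g w)).trans_eq (by
      rw [hΦg, one_mul, Submodule.coe_norm]))
  exact ⟨l, fun v => (hl ⟨Φ v, LinearMap.mem_range_self _ _⟩).trans (hΨ_eq (hΦg _))⟩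

/-- The function `(exp (-A / 2) - 1) / (y - x)`, where `A` is the difference form of `α`, is given
on the bidisk by a bounded functional of the kernel vectors, i.e. is a double power series with
square summable coefficients. -/
def HasExpFunctional (α : ℕ × ℕ → ℂ) : Prop :=
  ∃ l : lp (fun _ : ℕ × ℕ => ℂ) 2 →L[ℂ] ℂ, ∀ q : OpenBidisk,
    Complex.exp (-(1 / 2) * differenceForm α q.1.1 q.1.2) - 1
      = (q.1.2 - q.1.1) * l (bidiskKernel q)

theorem HasExpFunctional.of_tsum_grunskyWeight_le {α : ℕ × ℕ → ℂ}
    (hα : Summable (grunskyWeight α)) (hα4 : ∑' p, grunskyWeight α p ≤ 1 / 4) :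
    HasExpFunctional α := by
  obtain ⟨l, hl⟩ := exists_continuousLinearMap_comp_eq
    (Finsupp.linearCombination ℂ fun q : OpenBidisk => (q.1.2 - q.1.1) • bidiskKernel q)
    (Finsupp.linearCombination ℂ fun q : OpenBidisk =>
      Complex.exp (-(1 / 2) * differenceForm α q.1.1 q.1.2) - 1) fun v => by
    refine le_of_sq_le_sq ?_ (norm_nonneg _)
    have h := norm_sum_exp_differenceForm_sub_one_sq_le (ι := v.support) (fun p => v p)
      (fun p => p.1) hα hα4
    rw [Finsupp.linearCombination_apply, Finsupp.linearCombination_apply, Finsupp.sum, Finsupp.sum,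
      ← Finset.sum_coe_sort,
      ← Finset.sum_coe_sort v.support fun q => v q • (q.1.2 - q.1.1) • bidiskKernel q]
    refine h.trans_eq ?_
    rw [← inner_self_eq_norm_sq (𝕜 := ℂ), sum_inner]
    simp_rw [inner_sum, inner_smul_left, inner_smul_right, inner_bidiskKernel]
    rw [Finset.sum_comm]
    refine congrArg Complex.re (Finset.sum_congr rfl fun p _ => Finset.sum_congr rfl fun q _ => ?_)
    ring
  exact ⟨l, fun q => by simpa using (hl (Finsupp.single q 1)).symm⟩

end

section

open scoped ComplexConjugate

/-! ### Square summability of the quotient array -/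

theorem lp_two_norm_sq_eq_tsum {ι : Type*} {E : ι → Type*} [∀ i, NormedAddCommGroup (E i)]
    (v : lp E 2) : ‖v‖ ^ 2 = ∑' i, ‖v i‖ ^ 2 := by
  simpa using lp.norm_rpow_eq_tsum (p := 2) (by norm_num) v

/-- Precomposition with an injection, as an operator on `ℓ²`; for the two successor maps of `ℕ × ℕ`
these are the backward shifts. -/
noncomputable def lpPrecomp {ι κ : Type*} (e : ι ↪ κ) :
    lp (fun _ : κ => ℂ) 2 →L[ℂ] lp (fun _ : ι => ℂ) 2 :=
  LinearMap.mkContinuous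
    { toFun := fun v => ⟨fun i => v (e i), memℓp_two_iff_summable_norm_sq.mpr
        ((memℓp_two_iff_summable_norm_sq.mp v.2).comp_injective e.injective)⟩
      map_add' := fun _ _ => rfl
      map_smul' := fun _ _ => rfl } 1 fun v => by
    rw [one_mul]
    refine le_of_sq_le_sq ?_ (norm_nonneg _)
    rw [lp_two_norm_sq_eq_tsum, lp_two_norm_sq_eq_tsum]
    exact tsum_comp_le_tsum_of_inj (memℓp_two_iff_summable_norm_sq.mp v.2)
      (fun _ => sq_nonneg _) e.injective

theorem lpPrecomp_apply {ι κ : Type*} (e : ι ↪ κ) (v : lp (fun _ : κ => ℂ) 2) (i : ι) :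
    lpPrecomp e v i = v (e i) := rfl

theorem lpPrecomp_succ_fst_bidiskKernel (q : OpenBidisk) :
    lpPrecomp ⟨fun p : ℕ × ℕ => (p.1 + 1, p.2), succ_fst_injective⟩ (bidiskKernel q)
      = q.1.1 • bidiskKernel q := by
  ext p
  rw [lpPrecomp_apply, lp.coeFn_smul, Pi.smul_apply, smul_eq_mul, bidiskKernel_apply,
    bidiskKernel_apply, Function.Embedding.coeFn_mk]
  ring

theorem lpPrecomp_succ_snd_bidiskKernel (q : OpenBidisk) :
    lpPrecomp ⟨fun p : ℕ × ℕ => (p.1, p.2 + 1),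
      Function.injective_id.prodMap (add_left_injective 1)⟩ (bidiskKernel q)
      = q.1.2 • bidiskKernel q := by
  ext p
  rw [lpPrecomp_apply, lp.coeFn_smul, Pi.smul_apply, smul_eq_mul, bidiskKernel_apply,
    bidiskKernel_apply, Function.Embedding.coeFn_mk]
  ring

section Eigenvector

variable {𝕜 H : Type*} [NormedAddCommGroup H]

theorem pow_apply_of_apply_eq_smul [NormedField 𝕜] [NormedSpace 𝕜 H] {T : H →L[𝕜] H} {τ : 𝕜}
    {v : H} (h : T v = τ • v) (n : ℕ) : (T ^ n) v = τ ^ n • v := by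
  induction n with
  | zero => simp
  | succ n ih => rw [pow_succ, mul_apply_eq_comp, h, map_smul, ih, smul_smul, pow_succ']

theorem exp_apply_of_apply_eq_smul [RCLike 𝕜] [NormedSpace 𝕜 H] [CompleteSpace H]
    {T : H →L[𝕜] H} {τ : 𝕜} {v : H} (h : T v = τ • v) :
    NormedSpace.exp T v = NormedSpace.exp τ • v := by
  have hT := (ContinuousLinearMap.apply 𝕜 H v).hasSum
    (NormedSpace.exp_series_hasSum_exp' (𝕂 := 𝕜) T)
  refine hT.unique (((NormedSpace.exp_series_hasSum_exp' (𝕂 := 𝕜) τ).smul_const v).congr_fun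
    fun n => ?_)
  simp [pow_apply_of_apply_eq_smul h, smul_smul]

end Eigenvector

theorem exists_clm_apply_bidiskKernel_eq_differenceForm_smul {β : ℕ × ℕ → ℂ}
    (hβ : (Function.support β).Finite) :
    ∃ T : lp (fun _ : ℕ × ℕ => ℂ) 2 →L[ℂ] lp (fun _ : ℕ × ℕ => ℂ) 2, ∀ q : OpenBidisk,
      T (bidiskKernel q) = differenceForm β q.1.1 q.1.2 • bidiskKernel q := by
  have hX := lpPrecomp_succ_fst_bidiskKernel
  have hY := lpPrecomp_succ_snd_bidiskKernel
  set X := lpPrecomp (⟨fun p : ℕ × ℕ => (p.1 + 1, p.2), _⟩ : ℕ × ℕ ↪ ℕ × ℕ)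
  set Y := lpPrecomp (⟨fun p : ℕ × ℕ => (p.1, p.2 + 1), _⟩ : ℕ × ℕ ↪ ℕ × ℕ)
  have hXY (q : OpenBidisk) (n : ℕ) :
      (X ^ n - Y ^ n) (bidiskKernel q) = (q.1.1 ^ n - q.1.2 ^ n) • bidiskKernel q := by
    rw [_root_.sub_apply, pow_apply_of_apply_eq_smul (hX q), pow_apply_of_apply_eq_smul (hY q),
      ← sub_smul]
  refine ⟨∑ p ∈ hβ.toFinset,
    β p • ((X ^ (p.1 + 1) - Y ^ (p.1 + 1)) * (X ^ (p.2 + 1) - Y ^ (p.2 + 1))), fun q => ?_⟩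
  have hform : differenceForm β q.1.1 q.1.2 = ∑ p ∈ hβ.toFinset,
      β p * ((q.1.1 ^ (p.1 + 1) - q.1.2 ^ (p.1 + 1)) * (q.1.1 ^ (p.2 + 1) - q.1.2 ^ (p.2 + 1))) :=
    tsum_eq_sum fun p hp => by
      rw [Function.notMem_support.mp fun h => hp (hβ.mem_toFinset.mpr h), zero_mul]
  rw [hform, _root_.sum_apply, Finset.sum_smul]
  refine Finset.sum_congr rfl fun p _ => ?_
  rw [_root_.smul_apply, mul_apply_eq_comp, hXY, map_smul, hXY, smul_smul, smul_smul,
    mul_comm (_ - _), mul_assoc]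

theorem HasExpFunctional.add {α β : ℕ × ℕ → ℂ} (hα : HasExpFunctional α)
    (hβ : HasExpFunctional β) (hα_sum : BidiskSummable α) (hβ_sum : BidiskSummable β)
    (hβ_fin : (Function.support β).Finite) : HasExpFunctional (α + β) := by
  obtain ⟨l₁, hl₁⟩ := hα
  obtain ⟨l₂, hl₂⟩ := hβ
  obtain ⟨T, hT⟩ := exists_clm_apply_bidiskKernel_eq_differenceForm_smul hβ_fin
  refine ⟨l₂ + l₁.comp (NormedSpace.exp ((-(1 / 2) : ℂ) • T)), fun q => ?_⟩
  have hexp : NormedSpace.exp ((-(1 / 2) : ℂ) • T) (bidiskKernel q)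
      = Complex.exp (-(1 / 2) * differenceForm β q.1.1 q.1.2) • bidiskKernel q := by
    rw [Complex.exp_eq_exp_ℂ]
    exact exp_apply_of_apply_eq_smul (by rw [_root_.smul_apply, hT, smul_smul])
  rw [_root_.add_apply, ContinuousLinearMap.comp_apply, hexp, map_smul, smul_eq_mul,
    differenceForm_add hα_sum hβ_sum q.2.1 q.2.2, mul_add (-(1 / 2) : ℂ), Complex.exp_add]
  linear_combination hl₂ q + Complex.exp (-(1 / 2) * differenceForm β q.1.1 q.1.2) * hl₁ q

-- `exp (-A / 2)` is multiplicative in `α`, so the smallness assumption on a finitely supported `β`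
-- is removed by adding `β / N` repeatedly.
theorem HasExpFunctional.add_of_finite_support {α β : ℕ × ℕ → ℂ} (hα : HasExpFunctional α)
    (hα_sum : BidiskSummable α) (hβ_fin : (Function.support β).Finite) :
    HasExpFunctional (α + β) := by
  have hβ_fin' (c : ℂ) : (Function.support (c • β)).Finite :=
    hβ_fin.subset (Function.support_const_smul_subset c β)
  have hβ_weight (c : ℂ) : Summable (grunskyWeight (c • β)) :=
    summable_of_hasFiniteSupport <| (hβ_fin' c).subset fun p hp hp0 =>
      hp (by simp [grunskyWeight, hp0])
  have hβ_sum (c : ℂ) := BidiskSummable.of_summable_grunskyWeight (hβ_weight c)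
  obtain ⟨N, hN⟩ := exists_nat_gt (4 * ∑' p, grunskyWeight β p + 1)
  have hB : 0 ≤ ∑' p, grunskyWeight β p := tsum_nonneg (grunskyWeight_nonneg β)
  have hN1 : (1 : ℝ) < N := by linarith
  have hsmall : HasExpFunctional ((N : ℂ)⁻¹ • β) := by
    refine .of_tsum_grunskyWeight_le (hβ_weight _) ?_
    simp only [grunskyWeight_smul, tsum_mul_left, norm_inv, Complex.norm_natCast]
    rw [inv_pow, inv_mul_le_iff₀ (by positivity)]
    nlinarith
  have hmul (k : ℕ) : HasExpFunctional (α + ((k : ℂ) * (N : ℂ)⁻¹) • β) := by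
    induction k with
    | zero => simpa using hα
    | succ k ih =>
      rw [Nat.cast_succ, add_one_mul, add_smul, ← add_assoc]
      exact ih.add hsmall (hα_sum.add (hβ_sum _)) (hβ_sum _) (hβ_fin' _)
  have hN0 : (N : ℂ) ≠ 0 := by
    intro h
    rw [Nat.cast_eq_zero] at h
    rw [h, Nat.cast_zero] at hN1
    linarith
  simpa [hN0] using hmul N

theorem HasExpFunctional.of_summable_grunskyWeight {α : ℕ × ℕ → ℂ}
    (hα : Summable (grunskyWeight α)) : HasExpFunctional α := by
  obtain ⟨S, hS⟩ : ∃ S : Finset (ℕ × ℕ), ∑' p : { p // p ∉ S }, grunskyWeight α p < 1 / 4 :=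
    ((tendsto_tsum_compl_atTop_zero _).eventually_lt_const (by norm_num)).exists
  have htail_weight : Summable (grunskyWeight ((S : Set (ℕ × ℕ))ᶜ.indicator α)) := by
    rw [grunskyWeight_indicator]
    exact hα.indicator _
  have htail : HasExpFunctional ((S : Set (ℕ × ℕ))ᶜ.indicator α) := by
    refine .of_tsum_grunskyWeight_le htail_weight ?_
    rw [grunskyWeight_indicator, ← tsum_subtype]
    exact hS.le
  rw [← Set.indicator_compl_add_self (S : Set (ℕ × ℕ)) α]
  exact htail.add_of_finite_support (.of_summable_grunskyWeight htail_weight)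
    (S.finite_toSet.subset Set.support_indicator_subset)

theorem exists_summable_norm_sq_exp_differenceForm {α : ℕ × ℕ → ℂ}
    (hα : Summable (grunskyWeight α)) :
    ∃ m : ℕ × ℕ → ℂ, (Summable fun p => ‖m p‖ ^ 2) ∧ ∀ x y : ℂ, ‖x‖ < 1 → ‖y‖ < 1 →
      Complex.exp (-(1 / 2) * differenceForm α x y) = 1 + (y - x) * bidiskSum m x y := by
  obtain ⟨l, hl⟩ := HasExpFunctional.of_summable_grunskyWeight hα
  set w := (InnerProductSpace.toDual ℂ (lp (fun _ : ℕ × ℕ => ℂ) 2)).symm l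
  refine ⟨fun p => conj (w p), ?_, fun x y hx hy => ?_⟩
  · simpa using memℓp_two_iff_summable_norm_sq.mp w.2
  · have hw : l (bidiskKernel ⟨(x, y), hx, hy⟩) = bidiskSum (fun p => conj (w p)) x y := by
      rw [← InnerProductSpace.toDual_symm_apply, lp.inner_eq_tsum]
      refine tsum_congr fun p => ?_
      rw [bidiskKernel_apply, RCLike.inner_apply]
      ring
    have h := hl ⟨(x, y), hx, hy⟩
    rw [hw] at h
    linear_combination h

end

section

/-! ### The array of divided exponentials -/

/-- The coefficients of the double power series `(x, y) ↦ ∑ t (i, j) (ρ x)ⁱ (ρ y)ʲ`. -/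
def dilate (ρ : ℝ) (t : ℕ × ℕ → ℂ) : ℕ × ℕ → ℂ :=
  fun p => t p * (ρ : ℂ) ^ (p.1 + p.2)

theorem bidiskSum_dilate (ρ : ℝ) (t : ℕ × ℕ → ℂ) (x y : ℂ) :
    bidiskSum (dilate ρ t) x y = bidiskSum t (ρ * x) (ρ * y) :=
  tsum_congr fun p => by simp only [dilate]; ring

theorem dilate_one (t : ℕ × ℕ → ℂ) : dilate 1 t = t := by
  ext p
  simp [dilate]

theorem dilate_dilate_inv {ρ : ℝ} (hρ : 0 < ρ) (t : ℕ × ℕ → ℂ) :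
    dilate ρ (dilate ρ⁻¹ t) = t := by
  ext p
  simp [dilate, hρ.ne']

theorem norm_dilate_apply {ρ : ℝ} (hρ : 0 ≤ ρ) (t : ℕ × ℕ → ℂ) (p : ℕ × ℕ) :
    ‖dilate ρ t p‖ = ‖t p‖ * ρ ^ (p.1 + p.2) := by
  rw [dilate, norm_mul, norm_pow, Complex.norm_of_nonneg hρ]

theorem BidiskSummable.dilate_mono {t : ℕ × ℕ → ℂ} {ρ σ : ℝ} (h0 : 0 ≤ ρ) (hρσ : ρ ≤ σ)
    (ht : BidiskSummable (dilate σ t)) : BidiskSummable (dilate ρ t) := by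
  intro r hr0 hr1
  refine .of_nonneg_of_le (fun _ => by positivity) (fun p => ?_) (ht r hr0 hr1)
  rw [norm_dilate_apply h0, norm_dilate_apply (h0.trans hρσ)]
  gcongr

theorem BidiskSummable.of_forall_dilate {t : ℕ × ℕ → ℂ}
    (ht : ∀ ρ : ℝ, 0 < ρ → ρ < 1 → BidiskSummable (dilate ρ t)) : BidiskSummable t := by
  intro r hr0 hr1
  obtain ⟨ρ, hrρ, hρ1⟩ := exists_between hr1
  have hρ0 := hr0.trans_lt hrρ
  refine (ht ρ hρ0 hρ1 (r / ρ) (by positivity) ((div_lt_one hρ0).mpr hrρ)).congr fun p => ?_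
  rw [norm_dilate_apply hρ0.le, mul_assoc, ← mul_pow, mul_div_cancel₀ _ hρ0.ne']

theorem differenceForm_smul_dilate (ρ : ℝ) (α : ℕ × ℕ → ℂ) (x y : ℂ) :
    differenceForm ((ρ : ℂ) ^ 2 • dilate ρ α) x y = differenceForm α (ρ * x) (ρ * y) :=
  tsum_congr fun p => by simp only [dilate, Pi.smul_apply, smul_eq_mul]; ring

theorem BidiskSummable.summable_grunskyWeight_dilate {α : ℕ × ℕ → ℂ} (hα : BidiskSummable α)
    {ρ : ℝ} (h0 : 0 < ρ) (h1 : ρ < 1) : Summable (grunskyWeight (dilate ρ α)) := by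
  obtain ⟨σ, hρσ, hσ1⟩ := exists_between h1
  have hσ0 := h0.trans hρσ
  obtain ⟨C, hC⟩ := exists_nat_mul_pow_pred_le h0 hρσ
  replace hC (i : ℕ) : ((i : ℝ) + 1) * ρ ^ i ≤ C * σ ^ (i + 1) := by simpa using hC (i + 1)
  obtain ⟨D, hD⟩ := (hα ρ h0.le h1).tendsto_cofinite_zero.bddAbove_range_of_cofinite
  have hC0 : 0 ≤ C := nonneg_of_mul_nonneg_left (le_trans (by positivity) (hC 0)) (pow_pos hσ0 1)
  refine .of_nonneg_of_le (grunskyWeight_nonneg _) (fun p => ?_)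
    ((hα σ hσ0.le hσ1).mul_left (C ^ 2 * D * σ ^ 2))
  have hD_p : ‖α p‖ * ρ ^ (p.1 + p.2) ≤ D := hD ⟨p, rfl⟩
  calc grunskyWeight (dilate ρ α) p
      = (((p.1 : ℝ) + 1) * ρ ^ p.1) * (((p.2 : ℝ) + 1) * ρ ^ p.2) *
        (‖α p‖ * ρ ^ (p.1 + p.2)) * ‖α p‖ := by
        rw [grunskyWeight, norm_dilate_apply h0.le]
        ring
    _ ≤ (C * σ ^ (p.1 + 1)) * (C * σ ^ (p.2 + 1)) * D * ‖α p‖ := by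
        have hC₁ := hC p.1
        have hC₂ := hC p.2
        gcongr
    _ = C ^ 2 * D * σ ^ 2 * (‖α p‖ * σ ^ (p.1 + p.2)) := by ring

/-- `m` is the coefficient array of `(exp (-A / 2) - 1) / (y - x)` on the bidisk of radius `ρ`,
where `A = differenceForm α`. -/
structure IsExpQuotient (α m : ℕ × ℕ → ℂ) (ρ : ℝ) : Prop where
  summable : BidiskSummable (dilate ρ m)
  exp_eq : ∀ x y : ℂ, ‖x‖ < ρ → ‖y‖ < ρ →
    Complex.exp (-(1 / 2) * differenceForm α x y) = 1 + (y - x) * bidiskSum m x y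

namespace IsExpQuotient

variable {α m m' : ℕ × ℕ → ℂ} {ρ σ : ℝ}

theorem mono (h0 : 0 ≤ ρ) (hρσ : ρ ≤ σ) (h : IsExpQuotient α m σ) : IsExpQuotient α m ρ :=
  ⟨h.summable.dilate_mono h0 hρσ, fun x y hx hy =>
    h.exp_eq x y (hx.trans_le hρσ) (hy.trans_le hρσ)⟩

theorem eq (h0 : 0 < ρ) (h : IsExpQuotient α m ρ) (h' : IsExpQuotient α m' ρ) : m = m' := by
  have hρ : (ρ : ℂ) ≠ 0 := Complex.ofReal_ne_zero.mpr h0.ne'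
  have hball {z : ℂ} (hz : ‖z‖ < 1) : ‖(ρ : ℂ) * z‖ < ρ := by
    rw [norm_mul, Complex.norm_of_nonneg h0.le]
    exact mul_lt_of_lt_one_right h0 hz
  have hzero : dilate ρ m + (-1 : ℂ) • dilate ρ m' = 0 := by
    refine (h.summable.add (h'.summable.smul _)).eq_zero_of_bidiskSum_eq_zero one_pos le_rfl
      fun x y _ _ hxy hx hy => ?_
    rw [h.summable.bidiskSum_add (h'.summable.smul _) hx hy, bidiskSum_smul, bidiskSum_dilate,
      bidiskSum_dilate]
    have hne : (ρ : ℂ) * (y - x) ≠ 0 := mul_ne_zero hρ (sub_ne_zero.mpr hxy.symm)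
    refine mul_left_cancel₀ hne ?_
    linear_combination h'.exp_eq _ _ (hball hx) (hball hy) - h.exp_eq _ _ (hball hx) (hball hy)
  ext p
  have hp := congrFun hzero p
  simp only [dilate, Pi.add_apply, Pi.smul_apply, smul_eq_mul, Pi.zero_apply] at hp
  refine mul_right_cancel₀ (pow_ne_zero (p.1 + p.2) hρ) ?_
  linear_combination hp

theorem of_lt_one (h : ∀ ρ : ℝ, 1 / 2 ≤ ρ → ρ < 1 → IsExpQuotient α m ρ) :
    IsExpQuotient α m 1 := by
  refine ⟨?_, fun x y hx hy => ?_⟩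
  · rw [dilate_one]
    refine .of_forall_dilate fun ρ h0 h1 => ?_
    have hmax := h (max ρ (1 / 2)) (le_max_right _ _) (max_lt h1 (by norm_num))
    exact hmax.summable.dilate_mono h0.le (le_max_left _ _)
  · obtain ⟨ρ, hρ, hρ1⟩ := exists_between (max_lt (max_lt hx hy) (one_half_lt_one (α := ℝ)))
    simp only [max_lt_iff] at hρ
    exact (h ρ hρ.2.le hρ1).exp_eq x y hρ.1.1 hρ.1.2

theorem exists_of_summable_grunskyWeight (hα : Summable (grunskyWeight α)) :
    ∃ m, (Summable fun p => ‖m p‖ ^ 2) ∧ IsExpQuotient α m 1 := by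
  obtain ⟨m, hm, hexp⟩ := exists_summable_norm_sq_exp_differenceForm hα
  exact ⟨m, hm, by rw [dilate_one]; exact .of_summable_norm_sq hm, hexp⟩

theorem exists_of_bidiskSummable_of_lt_one (hα : BidiskSummable α) (h0 : 0 < ρ) (h1 : ρ < 1) :
    ∃ m, IsExpQuotient α m ρ := by
  have hρ : (ρ : ℂ) ≠ 0 := Complex.ofReal_ne_zero.mpr h0.ne'
  have hweight : Summable (grunskyWeight ((ρ : ℂ) ^ 2 • dilate ρ α)) :=
    ((hα.summable_grunskyWeight_dilate h0 h1).mul_left _).congr fun p =>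
      (grunskyWeight_smul _ _ _).symm
  obtain ⟨n, -, hn⟩ := exists_of_summable_grunskyWeight hweight
  have hn_summable : BidiskSummable n := dilate_one n ▸ hn.summable
  refine ⟨dilate ρ⁻¹ ((ρ : ℂ)⁻¹ • n), ?_, fun x y hx hy => ?_⟩
  · rw [dilate_dilate_inv h0]
    exact hn_summable.smul _
  · have hball {z : ℂ} (hz : ‖z‖ < ρ) : ‖(ρ : ℂ)⁻¹ * z‖ < 1 := by
      rwa [norm_mul, norm_inv, Complex.norm_of_nonneg h0.le, inv_mul_lt_one₀ h0]
    have h := hn.exp_eq _ _ (hball hx) (hball hy)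
    rw [differenceForm_smul_dilate, mul_inv_cancel_left₀ hρ, mul_inv_cancel_left₀ hρ] at h
    rw [h, bidiskSum_dilate, bidiskSum_smul, Complex.ofReal_inv]
    ring

theorem exists_of_bidiskSummable (hα : BidiskSummable α) : ∃ m, IsExpQuotient α m 1 := by
  obtain ⟨m, hm⟩ := exists_of_bidiskSummable_of_lt_one hα one_half_pos one_half_lt_one
  refine ⟨m, of_lt_one fun ρ hρ hρ1 => ?_⟩
  obtain ⟨m', hm'⟩ := exists_of_bidiskSummable_of_lt_one hα (one_half_pos.trans_le hρ) hρ1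
  rwa [hm.eq one_half_pos (hm'.mono one_half_pos.le hρ)]

theorem bidiskSummable (h : IsExpQuotient α m 1) : BidiskSummable m :=
  dilate_one m ▸ h.summable

theorem summable_norm_sq (h : IsExpQuotient α m 1) (hα : Summable (grunskyWeight α)) :
    Summable fun p => ‖m p‖ ^ 2 := by
  obtain ⟨n, hn, hn'⟩ := exists_of_summable_grunskyWeight hα
  rwa [h.eq one_pos hn']

end IsExpQuotient

/-! ### The Grunsky relation -/

/-- The coefficients of the Grunsky series `F(x, y) = x y ∑ α (i, j) xⁱ yʲ`, so that
`α (i, j)` is the Grunsky coefficient `a_{i+1, j+1}`. -/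
def grunskySeries (α : ℕ × ℕ → ℂ) : ℕ × ℕ → ℂ :=
  shiftFst (shiftSnd α)

theorem bidiskSum_grunskySeries (α : ℕ × ℕ → ℂ) (x y : ℂ) :
    bidiskSum (grunskySeries α) x y = x * y * bidiskSum α x y := by
  rw [grunskySeries, bidiskSum_shiftFst, bidiskSum_shiftSnd, mul_assoc]

theorem grunskySeries_comp_swap (α : ℕ × ℕ → ℂ) :
    grunskySeries α ∘ Prod.swap = grunskySeries (α ∘ Prod.swap) := by
  ext ⟨_ | i, _ | j⟩ <;> rfl

/-- `α` is the array of Grunsky coefficients of the function `Φ(x) = φ(x⁻¹)` on the punctured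
disk: `α (i, j) = a_{i+1, j+1}`, and the defining relation is written in `x = ζ⁻¹`, `y = z⁻¹`. -/
structure IsGrunskyArray (α : ℕ × ℕ → ℂ) (Φ : ℂ → ℂ) : Prop where
  summable : BidiskSummable α
  comp_swap : α ∘ Prod.swap = α
  sub_eq : ∀ x y : ℂ, x ≠ 0 → y ≠ 0 → ‖x‖ < 1 → ‖y‖ < 1 →
    Φ x - Φ y = (x⁻¹ - y⁻¹) * Complex.exp (-bidiskSum (grunskySeries α) x y)

theorem eventually_ne_zero_and_norm_lt_one {x : ℂ} (hx0 : x ≠ 0) (hx : ‖x‖ < 1) :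
    ∀ᶠ w in nhds x, w ≠ 0 ∧ ‖w‖ < 1 :=
  (eventually_ne_nhds hx0).and (continuous_norm.continuousAt.eventually_lt_const hx)

namespace IsGrunskyArray

variable {α : ℕ × ℕ → ℂ} {Φ : ℂ → ℂ} {x y : ℂ}

theorem summable_grunskySeries (h : IsGrunskyArray α Φ) : BidiskSummable (grunskySeries α) :=
  h.summable.shiftSnd.shiftFst

theorem grunskySeries_comp_swap (h : IsGrunskyArray α Φ) :
    grunskySeries α ∘ Prod.swap = grunskySeries α := by
  rw [_root_.grunskySeries_comp_swap, h.comp_swap]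

theorem bidiskSum_comm (h : IsGrunskyArray α Φ) (x y : ℂ) :
    bidiskSum (grunskySeries α) x y = bidiskSum (grunskySeries α) y x := by
  rw [← bidiskSum_swap, h.grunskySeries_comp_swap]

theorem bidiskSum_derivFst_comm (h : IsGrunskyArray α Φ) (x y : ℂ) :
    bidiskSum (derivFst (grunskySeries α)) y x = bidiskSum (derivSnd (grunskySeries α)) x y := by
  rw [derivSnd, h.grunskySeries_comp_swap, bidiskSum_swap]

theorem differenceForm_eq (h : IsGrunskyArray α Φ) (hx : ‖x‖ < 1) (hy : ‖y‖ < 1) :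
    differenceForm α x y = bidiskSum (grunskySeries α) x x + bidiskSum (grunskySeries α) y y
      - 2 * bidiskSum (grunskySeries α) x y := by
  have hcomm := h.bidiskSum_comm x y
  rw [bidiskSum_grunskySeries, bidiskSum_grunskySeries] at hcomm
  simp only [h.summable.differenceForm_eq hx hy, bidiskSum_grunskySeries]
  linear_combination hcomm

theorem hasDerivAt (h : IsGrunskyArray α Φ) (hx0 : x ≠ 0) (hy0 : y ≠ 0) (hx : ‖x‖ < 1)
    (hy : ‖y‖ < 1) :
    HasDerivAt Φ (-(x ^ 2)⁻¹ * Complex.exp (-bidiskSum (grunskySeries α) x y) +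
      (x⁻¹ - y⁻¹) * (Complex.exp (-bidiskSum (grunskySeries α) x y) *
        -bidiskSum (derivFst (grunskySeries α)) x y)) x := by
  have hF := h.summable_grunskySeries.hasDerivAt_fst hx hy
  refine ((((hasDerivAt_inv hx0).sub_const y⁻¹).mul hF.neg.cexp).add_const
    (Φ y)).congr_of_eventuallyEq ?_
  filter_upwards [eventually_ne_zero_and_norm_lt_one hx0 hx] with w hw
  exact sub_eq_iff_eq_add.mp (h.sub_eq w y hw.1 hy0 hw.2 hy)

theorem exp_neg_bidiskSum_self (h : IsGrunskyArray α Φ) (hx0 : x ≠ 0) (hy0 : y ≠ 0)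
    (hx : ‖x‖ < 1) (hy : ‖y‖ < 1) :
    Complex.exp (-bidiskSum (grunskySeries α) x x) =
      Complex.exp (-bidiskSum (grunskySeries α) x y) *
        (1 + (x - x ^ 2 * y⁻¹) * bidiskSum (derivFst (grunskySeries α)) x y) := by
  have hderiv := (h.hasDerivAt hx0 hx0 hx hx).unique (h.hasDerivAt hx0 hy0 hx hy)
  rw [sub_self, zero_mul, add_zero] at hderiv
  field_simp at hderiv ⊢
  linear_combination -hderiv

theorem bidiskSum_deriv_relation (h : IsGrunskyArray α Φ) (hx0 : x ≠ 0) (hy0 : y ≠ 0)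
    (hx : ‖x‖ < 1) (hy : ‖y‖ < 1) :
    -bidiskSum (derivSnd (grunskySeries α)) x y *
        (1 + (x - x ^ 2 * y⁻¹) * bidiskSum (derivFst (grunskySeries α)) x y)
      + x ^ 2 * (y ^ 2)⁻¹ * bidiskSum (derivFst (grunskySeries α)) x y
      + (x - x ^ 2 * y⁻¹) * bidiskSum (derivSnd (derivFst (grunskySeries α))) x y = 0 := by
  have hF := h.summable_grunskySeries
  have hfactor := ((((hasDerivAt_inv hy0).const_mul (x ^ 2)).const_sub x).mul
    (hF.derivFst.hasDerivAt_snd hx hy)).const_add 1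
  have hconst : HasDerivAt (fun w => Complex.exp (-bidiskSum (grunskySeries α) x w) *
      (1 + (x - x ^ 2 * w⁻¹) * bidiskSum (derivFst (grunskySeries α)) x w)) 0 y := by
    refine (hasDerivAt_const y (Complex.exp (-bidiskSum (grunskySeries α) x x)))
      |>.congr_of_eventuallyEq ?_
    filter_upwards [eventually_ne_zero_and_norm_lt_one hy0 hy] with w hw
    exact (h.exp_neg_bidiskSum_self hx0 hw.1 hx hw.2).symm
  have hzero := hconst.unique ((hF.hasDerivAt_snd hx hy).neg.cexp.mul hfactor)
  refine mul_left_cancel₀ (Complex.exp_ne_zero (-bidiskSum (grunskySeries α) x y)) ?_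
  simp only [Pi.neg_apply] at hzero
  linear_combination -hzero

theorem exp_differenceForm_sq (h : IsGrunskyArray α Φ) (hx0 : x ≠ 0) (hy0 : y ≠ 0)
    (hx : ‖x‖ < 1) (hy : ‖y‖ < 1) :
    Complex.exp (-(1 / 2) * differenceForm α x y) ^ 2
      = 1 - (y - x) ^ 2 * bidiskSum (derivSnd (derivFst (grunskySeries α))) x y := by
  have hxx := h.exp_neg_bidiskSum_self hx0 hy0 hx hy
  have hyy := h.exp_neg_bidiskSum_self hy0 hx0 hy hx
  rw [h.bidiskSum_derivFst_comm, h.bidiskSum_comm y x] at hyy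
  have hexp : Complex.exp (-(1 / 2) * differenceForm α x y) ^ 2
      = Complex.exp (-bidiskSum (grunskySeries α) x x) *
        Complex.exp (-bidiskSum (grunskySeries α) y y) *
        Complex.exp (bidiskSum (grunskySeries α) x y) ^ 2 := by
    simp only [h.differenceForm_eq hx hy, ← Complex.exp_nat_mul, ← Complex.exp_add]
    congr 1
    push_cast
    ring
  have hrel := h.bidiskSum_deriv_relation hx0 hy0 hx hy
  rw [hexp, hxx, hyy, Complex.exp_neg]
  field_simp at hrel ⊢
  linear_combination (y - x) * hrel

theorem shiftFst_sub_shiftSnd_eq (h : IsGrunskyArray α Φ) {m : ℕ × ℕ → ℂ}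
    (hm : IsExpQuotient α m 1) (p : ℕ × ℕ) :
    shiftFst (derivSnd (derivFst (grunskySeries α)) + cauchyProd m m) p
      - shiftSnd (derivSnd (derivFst (grunskySeries α)) + cauchyProd m m) p = 2 * m p := by
  have hG := h.summable_grunskySeries.derivFst.derivSnd
  have hm' := hm.bidiskSummable
  set B := derivSnd (derivFst (grunskySeries α)) + cauchyProd m m with hB_def
  have hB : BidiskSummable B := hG.add (hm'.cauchyProd hm')
  have hzero : shiftFst B + (-1 : ℂ) • shiftSnd B + (-2 : ℂ) • m = 0 := by
    refine ((hB.shiftFst.add (hB.shiftSnd.smul _)).add (hm'.smul _)).eq_zero_of_bidiskSum_eq_zero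
      one_pos le_rfl fun x y hx0 hy0 hxy hx hy => mul_left_cancel₀ (sub_ne_zero.mpr hxy) ?_
    have hsq := h.exp_differenceForm_sq hx0 hy0 hx hy
    rw [hm.exp_eq x y hx hy] at hsq
    rw [(hB.shiftFst.add (hB.shiftSnd.smul _)).bidiskSum_add (hm'.smul _) hx hy,
      hB.shiftFst.bidiskSum_add (hB.shiftSnd.smul _) hx hy, bidiskSum_smul, bidiskSum_smul,
      bidiskSum_shiftFst, bidiskSum_shiftSnd, hB_def, hG.bidiskSum_add (hm'.cauchyProd hm') hx hy,
      hm'.bidiskSum_cauchyProd hm' hx hy]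
    linear_combination hsq
  have hp := congrFun hzero p
  simp only [Pi.add_apply, Pi.smul_apply, smul_eq_mul, Pi.zero_apply] at hp
  linear_combination hp

end IsGrunskyArray

end

section

open Finset.HasAntidiagonal (antidiagonal)

/-! ### The discrete Poincaré inequality -/

theorem summable_iff_summable_sum_antidiagonal {A : Type*} [AddCommMonoid A]
    [Finset.HasAntidiagonal A] {f : A × A → ℝ} (hf : ∀ p, 0 ≤ f p) :
    Summable f ↔ Summable fun s => ∑ p ∈ antidiagonal s, f p := by
  rw [← Finset.HasAntidiagonal.sigmaAntidiagonalEquivProd.summable_iff]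
  refine (summable_sigma_of_nonneg fun _ => hf _).trans ?_
  rw [and_iff_right fun _ => (hasSum_fintype _).summable]
  exact summable_congr fun s => Finset.tsum_subtype (antidiagonal s) f

-- The difference of the two sides is `(‖z‖ v - ‖w‖ u)² / (u v)` up to the reverse triangle
-- inequality; when a weight vanishes, division by it contributes `0` and so does the vector.
theorem norm_sq_mul_add_le_norm_sub_sq {E : Type*} [SeminormedAddCommGroup E] {z w : E} {u v : ℝ}
    (hu : 0 ≤ u) (hv : 0 ≤ v) (hz : u = 0 → z = 0) (hw : v = 0 → w = 0) :
    ‖z‖ ^ 2 * (1 - v / u) + ‖w‖ ^ 2 * (1 - u / v) ≤ ‖z - w‖ ^ 2 := by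
  rcases hu.eq_or_lt with rfl | hu
  · simp [hz rfl]
  rcases hv.eq_or_lt with rfl | hv
  · simp [hw rfl]
  have htri : (‖z‖ - ‖w‖) ^ 2 ≤ ‖z - w‖ ^ 2 :=
    sq_le_sq.mpr ((abs_norm_sub_norm_le z w).trans (le_abs_self _))
  have hsq : (‖z‖ - ‖w‖) ^ 2 - (‖z‖ ^ 2 * (1 - v / u) + ‖w‖ ^ 2 * (1 - u / v))
      = (‖z‖ * v - ‖w‖ * u) ^ 2 / (u * v) := by
    field_simp
    ring
  have hsq_nonneg : 0 ≤ (‖z‖ * v - ‖w‖ * u) ^ 2 / (u * v) := by positivity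
  linarith

-- Sums the pointwise inequality along the antidiagonal with the weights `i (j + 1)` and
-- `(i + 1) j`, a positive supersolution of the discrete Laplacian.
theorem sum_antidiagonal_norm_sq_div_le (B : ℕ × ℕ → ℂ) (s : ℕ) :
    2 * ∑ p ∈ antidiagonal s, ‖B p‖ ^ 2 / (((p.1 : ℝ) + 1) * ((p.2 : ℝ) + 1))
      ≤ ∑ p ∈ antidiagonal (s + 1), ‖shiftFst B p - shiftSnd B p‖ ^ 2 := by
  have hstep (p : ℕ × ℕ) :
      ‖shiftFst B p‖ ^ 2 * (1 - ((p.1 + 1) * p.2) / (p.1 * (p.2 + 1)))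
        + ‖shiftSnd B p‖ ^ 2 * (1 - (p.1 * (p.2 + 1)) / ((p.1 + 1) * p.2))
      ≤ ‖shiftFst B p - shiftSnd B p‖ ^ 2 := by
    refine norm_sq_mul_add_le_norm_sub_sq (by positivity) (by positivity) (fun hp => ?_)
      fun hp => ?_
    · obtain ⟨_ | i, j⟩ := p
      · rfl
      · exact absurd hp (by positivity)
    · obtain ⟨i, _ | j⟩ := p
      · rfl
      · exact absurd hp (by positivity)
  refine le_trans (le_of_eq ?_) (Finset.sum_le_sum fun p _ => hstep p)
  rw [Finset.sum_add_distrib, Finset.Nat.sum_antidiagonal_succ, Finset.Nat.sum_antidiagonal_succ',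
    Finset.mul_sum]
  simp only [shiftSnd, shiftFst, Function.comp_apply, Prod.swap_prod_mk, norm_zero, ne_eq,
    OfNat.ofNat_ne_zero, not_false_eq_true, zero_pow, zero_mul, zero_add]
  rw [← Finset.sum_add_distrib]
  refine Finset.sum_congr rfl fun p _ => ?_
  push_cast
  field_simp
  ring

theorem summable_norm_sq_div_of_shiftFst_sub_shiftSnd {B : ℕ × ℕ → ℂ}
    (hB : Summable fun p => ‖shiftFst B p - shiftSnd B p‖ ^ 2) :
    Summable fun p : ℕ × ℕ => ‖B p‖ ^ 2 / (((p.1 : ℝ) + 1) * ((p.2 : ℝ) + 1)) := by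
  rw [summable_iff_summable_sum_antidiagonal fun _ => sq_nonneg _] at hB
  rw [summable_iff_summable_sum_antidiagonal fun _ => by positivity]
  refine .of_nonneg_of_le (fun s => Finset.sum_nonneg fun p _ => by positivity) (fun s => ?_)
    (((summable_nat_add_iff 1).mpr hB).div_const 2)
  rw [le_div_iff₀' two_pos]
  exact sum_antidiagonal_norm_sq_div_le B s

theorem summable_norm_cauchyProd_sq_div {s t : ℕ × ℕ → ℂ} (hs : Summable fun p => ‖s p‖ ^ 2)
    (ht : Summable fun p => ‖t p‖ ^ 2) :
    Summable fun p : ℕ × ℕ => ‖cauchyProd s t p‖ ^ 2 / (((p.1 : ℝ) + 1) * ((p.2 : ℝ) + 1)) := by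
  have hsum : Summable fun p : ℕ × ℕ => ∑ q ∈ antidiagonal p, ‖s q.1‖ ^ 2 * ‖t q.2‖ ^ 2 :=
    summable_sum_mul_antidiagonal_of_summable_mul (A := ℕ × ℕ)
      (f := fun p => ‖s p‖ ^ 2) (g := fun p => ‖t p‖ ^ 2)
      (hs.mul_of_nonneg ht (fun _ => sq_nonneg _) fun _ => sq_nonneg _)
  refine .of_nonneg_of_le (fun p => by positivity) (fun p => ?_) hsum
  rw [div_le_iff₀' (by positivity), cauchyProd]
  calc ‖∑ q ∈ antidiagonal p, s q.1 * t q.2‖ ^ 2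
      ≤ (∑ q ∈ antidiagonal p, ‖s q.1 * t q.2‖) ^ 2 := by
        gcongr
        exact norm_sum_le _ _
    _ ≤ (antidiagonal p).card * ∑ q ∈ antidiagonal p, ‖s q.1 * t q.2‖ ^ 2 :=
        sq_sum_le_card_mul_sum_sq
    _ ≤ (((p.1 : ℝ) + 1) * ((p.2 : ℝ) + 1)) *
        ∑ q ∈ antidiagonal p, ‖s q.1‖ ^ 2 * ‖t q.2‖ ^ 2 := by
        simp only [norm_mul, mul_pow]
        gcongr
        exact_mod_cast card_antidiagonal_nat_prod_le p

theorem grunskyWeight_eq_norm_sq_div (α : ℕ × ℕ → ℂ) (p : ℕ × ℕ) :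
    grunskyWeight α p = ‖derivSnd (derivFst (grunskySeries α)) p‖ ^ 2 /
      (((p.1 : ℝ) + 1) * ((p.2 : ℝ) + 1)) := by
  have hderiv : derivSnd (derivFst (grunskySeries α)) p
      = ((p.2 + 1 : ℕ) : ℂ) * (((p.1 + 1 : ℕ) : ℂ) * α p) := rfl
  rw [hderiv, norm_mul, norm_mul, Complex.norm_natCast, Complex.norm_natCast, grunskyWeight]
  push_cast
  field_simp

theorem IsGrunskyArray.summable_grunskyWeight_iff {α m : ℕ × ℕ → ℂ} {Φ : ℂ → ℂ}
    (h : IsGrunskyArray α Φ) (hm : IsExpQuotient α m 1) :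
    Summable (grunskyWeight α) ↔ Summable fun p => ‖m p‖ ^ 2 := by
  refine ⟨hm.summable_norm_sq, fun hm_sq => ?_⟩
  set G := derivSnd (derivFst (grunskySeries α))
  have hdiff : Summable fun p => ‖shiftFst (G + cauchyProd m m) p
      - shiftSnd (G + cauchyProd m m) p‖ ^ 2 :=
    (hm_sq.mul_left 4).congr fun p => by
      rw [h.shiftFst_sub_shiftSnd_eq hm, norm_mul, mul_pow, RCLike.norm_ofNat]
      norm_num
  refine .of_nonneg_of_le (grunskyWeight_nonneg α) (fun p => ?_)
    (((summable_norm_sq_div_of_shiftFst_sub_shiftSnd hdiff).add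
      (summable_norm_cauchyProd_sq_div hm_sq hm_sq)).mul_left 2)
  rw [grunskyWeight_eq_norm_sq_div, ← add_div, ← mul_div_assoc]
  gcongr
  calc ‖G p‖ ^ 2 = ‖(G + cauchyProd m m) p - cauchyProd m m p‖ ^ 2 := by simp
    _ ≤ (‖(G + cauchyProd m m) p‖ + ‖cauchyProd m m p‖) ^ 2 := by
        gcongr
        exact norm_sub_le _ _
    _ ≤ 2 * (‖(G + cauchyProd m m) p‖ ^ 2 + ‖cauchyProd m m p‖ ^ 2) := add_sq_le

end

section

/-! ### The Faber functions -/

/-- The `j`-th row `∑ₖ t (j, k) yᵏ` of a double power series. -/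
noncomputable def rowSum (t : ℕ × ℕ → ℂ) (j : ℕ) (y : ℂ) : ℂ :=
  ∑' k, t (j, k) * y ^ k

/-- The function `zʲ + ∑ₖ m (j, k) z^(-k-1)` in the variable `y = z⁻¹`. When `m` comes from the
Grunsky coefficients of `φ`, it is a monic polynomial of degree `j` in `φ z` times a square root
of `φ' z`. -/
noncomputable def faberFunction (m : ℕ × ℕ → ℂ) (j : ℕ) (y : ℂ) : ℂ :=
  y⁻¹ ^ j + y * rowSum m j y

/-- `exp (-F (y, y) / 2)` for the Grunsky series `F`: a square root of `φ' (y⁻¹)`. -/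
noncomputable def sqrtDeriv (α : ℕ × ℕ → ℂ) (y : ℂ) : ℂ :=
  Complex.exp (-(1 / 2) * bidiskSum (grunskySeries α) y y)

/-- The Laurent expansion `φ z = z + φ₀ + ∑ₖ cₖ z^(-k-1)` for `Φ y = φ (y⁻¹)`. -/
def HasLaurentSeries (Φ : ℂ → ℂ) (φ₀ : ℂ) (c : ℕ → ℂ) : Prop :=
  ∀ y : ℂ, y ≠ 0 → ‖y‖ < 1 → HasSum (fun k => c k * y ^ (k + 1)) (Φ y - y⁻¹ - φ₀)

/-- The power series coefficients of `x ↦ x (Φ x - w)`. -/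
def laurentSubCoeff (φ₀ : ℂ) (c : ℕ → ℂ) (w : ℂ) : ℕ → ℂ
  | 0 => 1
  | 1 => φ₀ - w
  | k + 2 => c k

/-- The power series coefficients of `sqrtDeriv`. -/
def sqrtDerivCoeff (m : ℕ × ℕ → ℂ) : ℕ → ℂ
  | 0 => 1
  | j + 1 => -m (j, 0)

theorem BidiskSummable.summable_snd {t : ℕ × ℕ → ℂ} (ht : BidiskSummable t) (j : ℕ) {y : ℂ}
    (hy : ‖y‖ < 1) : Summable fun k => t (j, k) * y ^ k :=
  ht.swap.summable_fst hy j

theorem BidiskSummable.hasSum_rowSum {t : ℕ × ℕ → ℂ} (ht : BidiskSummable t) {x y : ℂ}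
    (hx : ‖x‖ < 1) (hy : ‖y‖ < 1) : HasSum (fun j => rowSum t j y * x ^ j) (bidiskSum t x y) :=
  (ht.summable hx hy).hasSum.prod_fiberwise fun j =>
    ((ht.summable_snd j hy).hasSum.mul_right (x ^ j)).congr_fun fun k => by ring

theorem rowSum_zero_right (t : ℕ × ℕ → ℂ) (j : ℕ) : rowSum t j 0 = t (j, 0) := by
  rw [rowSum, tsum_eq_single 0 fun k hk => by simp [hk], pow_zero, mul_one]

theorem BidiskSummable.hasSum_faberFunction {m : ℕ × ℕ → ℂ} (hm : BidiskSummable m) {x y : ℂ}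
    (hxy : ‖x‖ < ‖y‖) (hy : ‖y‖ < 1) :
    HasSum (fun j => faberFunction m j y * x ^ j) ((1 - y⁻¹ * x)⁻¹ + y * bidiskSum m x y) := by
  have hgeom : ‖y⁻¹ * x‖ < 1 := by
    rwa [norm_mul, norm_inv, inv_mul_lt_one₀ ((norm_nonneg _).trans_lt hxy)]
  refine ((hasSum_geometric_of_norm_lt_one hgeom).add
    ((hm.hasSum_rowSum (hxy.trans hy) hy).mul_left y)).congr_fun fun j => ?_
  rw [faberFunction, mul_pow]
  ring

theorem HasLaurentSeries.hasSum_laurentSubCoeff {Φ : ℂ → ℂ} {φ₀ : ℂ} {c : ℕ → ℂ}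
    (hΦ : HasLaurentSeries Φ φ₀ c) (w : ℂ) {x : ℂ} (hx0 : x ≠ 0) (hx : ‖x‖ < 1) :
    HasSum (fun k => laurentSubCoeff φ₀ c w k * x ^ k) (x * (Φ x - w)) := by
  have hhead : x * (Φ x - w) - ∑ i ∈ Finset.range 2, laurentSubCoeff φ₀ c w i * x ^ i
      = x * (Φ x - x⁻¹ - φ₀) := by
    simp only [Finset.sum_range_succ, Finset.sum_range_zero, laurentSubCoeff]
    field_simp
    ring
  rw [← hasSum_nat_add_iff' 2, hhead]
  refine ((hΦ x hx0 hx).mul_left x).congr_fun fun k => ?_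
  rw [laurentSubCoeff]
  ring

theorem IsExpQuotient.hasSum_sqrtDerivCoeff {α m : ℕ × ℕ → ℂ} {Φ : ℂ → ℂ}
    (h : IsGrunskyArray α Φ) (hm : IsExpQuotient α m 1) {x : ℂ} (hx : ‖x‖ < 1) :
    HasSum (fun k => sqrtDerivCoeff m k * x ^ k) (sqrtDeriv α x) := by
  have hsqrt : sqrtDeriv α x = 1 + -x * bidiskSum m x 0 := by
    have hexp := hm.exp_eq x 0 hx (by simp)
    simpa [h.differenceForm_eq hx, bidiskSum_grunskySeries, sqrtDeriv] using hexp
  rw [← hasSum_nat_add_iff' 1, hsqrt, Finset.sum_range_one, sqrtDerivCoeff, pow_zero, mul_one,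
    add_sub_cancel_left]
  refine ((hm.bidiskSummable.hasSum_rowSum hx (y := 0) (by simp)).mul_left (-x)).congr_fun
    fun k => ?_
  rw [rowSum_zero_right, sqrtDerivCoeff]
  ring

namespace IsGrunskyArray

variable {α m : ℕ × ℕ → ℂ} {Φ : ℂ → ℂ} {x y : ℂ}

-- Both factors on the left are generating functions in `x`; comparing coefficients gives a
-- recurrence for the Faber functions at `y`.
theorem mul_generating_eq_sqrtDeriv_mul (h : IsGrunskyArray α Φ) (hm : IsExpQuotient α m 1)
    (hx0 : x ≠ 0) (hxy : ‖x‖ < ‖y‖) (hy : ‖y‖ < 1) :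
    x * (Φ x - Φ y) * ((1 - y⁻¹ * x)⁻¹ + y * bidiskSum m x y)
      = sqrtDeriv α x * sqrtDeriv α y := by
  have hx := hxy.trans hy
  have hy0 : y ≠ 0 := norm_pos_iff.mp ((norm_nonneg _).trans_lt hxy)
  have hne : y - x ≠ 0 := sub_ne_zero.mpr fun hyx => hxy.ne' (congrArg norm hyx)
  have hsum : (1 - y⁻¹ * x)⁻¹ + y * bidiskSum m x y
      = y / (y - x) * Complex.exp (-(1 / 2) * differenceForm α x y) := by
    have hdiv : 1 - y⁻¹ * x = (y - x) / y := by field_simp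
    rw [hm.exp_eq x y hx hy, hdiv, inv_div]
    field_simp
  have hcoef : x * (x⁻¹ - y⁻¹) * (y / (y - x)) = 1 := by field_simp
  calc x * (Φ x - Φ y) * ((1 - y⁻¹ * x)⁻¹ + y * bidiskSum m x y)
      = (x * (x⁻¹ - y⁻¹) * (y / (y - x))) *
        (Complex.exp (-bidiskSum (grunskySeries α) x y) *
          Complex.exp (-(1 / 2) * differenceForm α x y)) := by
        rw [h.sub_eq x y hx0 hy0 hx hy, hsum]
        ring
    _ = sqrtDeriv α x * sqrtDeriv α y := by
        rw [hcoef, one_mul, sqrtDeriv, sqrtDeriv, ← Complex.exp_add, ← Complex.exp_add,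
          h.differenceForm_eq hx hy]
        ring_nf

theorem sum_laurentSubCoeff_mul_faberFunction (h : IsGrunskyArray α Φ)
    (hm : IsExpQuotient α m 1) {φ₀ : ℂ} {c : ℕ → ℂ} (hΦ : HasLaurentSeries Φ φ₀ c)
    (hy0 : y ≠ 0) (hy : ‖y‖ < 1) (n : ℕ) :
    ∑ i ∈ Finset.range (n + 1), laurentSubCoeff φ₀ c (Φ y) i * faberFunction m (n - i) y
      = sqrtDerivCoeff m n * sqrtDeriv α y := by
  rw [← sub_eq_zero]
  refine congrFun (coeff_eq_zero_of_hasSum_zero (c := fun n => ∑ i ∈ Finset.range (n + 1),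
    laurentSubCoeff φ₀ c (Φ y) i * faberFunction m (n - i) y - sqrtDerivCoeff m n * sqrtDeriv α y)
    (norm_pos_iff.mpr hy0) fun x hx0 hxy => ?_) n
  have hx := hxy.trans hy
  have hlaurent := hΦ.hasSum_laurentSubCoeff (Φ y) hx0 hx
  have hfaber := hm.bidiskSummable.hasSum_faberFunction hxy hy
  have hprod := hasSum_sum_range_mul_of_summable_norm hlaurent.summable.norm hfaber.summable.norm
  rw [hlaurent.tsum_eq, hfaber.tsum_eq, h.mul_generating_eq_sqrtDeriv_mul hm hx0 hxy hy] at hprod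
  rw [← sub_self (sqrtDeriv α x * sqrtDeriv α y)]
  refine (hprod.sub ((hm.hasSum_sqrtDerivCoeff h hx).mul_right (sqrtDeriv α y))).congr_fun
    fun k => ?_
  rw [sub_mul, Finset.sum_mul, mul_right_comm (sqrtDerivCoeff m k)]
  congr 1
  refine Finset.sum_congr rfl fun i hi => ?_
  rw [← Nat.add_sub_cancel' (Nat.le_of_lt_succ (Finset.mem_range.mp hi)), pow_add,
    Nat.add_sub_cancel_left]
  ring

end IsGrunskyArray

theorem exists_monic_eval_mul_eq_of_recurrence {R S : Type*} [CommRing R] [Nontrivial R]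
    {w s : S → R} {f : ℕ → S → R} {a : R} {c σ : ℕ → R} (hf0 : ∀ y, f 0 y = s y)
    (hf : ∀ n y, f (n + 1) y = (w y - a) * f n y
      - ∑ i ∈ Finset.range n, c i * f (n - (i + 1)) y + σ n * s y) (n : ℕ) :
    ∃ P : Polynomial R, P.Monic ∧ P.natDegree = n ∧ ∀ y, f n y = P.eval (w y) * s y := by
  induction n using Nat.strong_induction_on with
  | _ n ih =>
  rcases n with _ | n
  · exact ⟨1, Polynomial.monic_one, by simp, fun y => by simp [hf0]⟩
  choose! P hP_monic hP_deg hP_eval using ih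
  set Q : Polynomial R := (Polynomial.X - Polynomial.C a) * P n with hQ
  set T : Polynomial R := Polynomial.C (σ n)
    - ∑ i ∈ Finset.range n, Polynomial.C (c i) * P (n - (i + 1)) with hT
  have hQ_monic : Q.Monic := (Polynomial.monic_X_sub_C a).mul (hP_monic n n.lt_succ_self)
  have hQ_deg : Q.natDegree = n + 1 := by
    rw [hQ, (Polynomial.monic_X_sub_C a).natDegree_mul (hP_monic n n.lt_succ_self),
      Polynomial.natDegree_X_sub_C, hP_deg n n.lt_succ_self, add_comm]
  have hT_deg : T.natDegree ≤ n := by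
    refine (Polynomial.natDegree_sub_le _ _).trans (max_le (by simp) ?_)
    refine Polynomial.natDegree_sum_le_of_forall_le _ _ fun i _ => ?_
    refine (Polynomial.natDegree_C_mul_le _ _).trans ?_
    rw [hP_deg _ (by omega)]
    exact Nat.sub_le _ _
  have hTQ : T.degree < Q.degree := Polynomial.degree_lt_degree (by omega)
  refine ⟨Q + T, hQ_monic.add_of_left hTQ, ?_, fun y => ?_⟩
  · rw [Polynomial.natDegree_add_eq_left_of_degree_lt hTQ, hQ_deg]
  · have hsum : ∑ i ∈ Finset.range n, c i * f (n - (i + 1)) y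
        = (∑ i ∈ Finset.range n, c i * (P (n - (i + 1))).eval (w y)) * s y := by
      rw [Finset.sum_mul]
      exact Finset.sum_congr rfl fun i _ => by rw [hP_eval _ (by omega) y, mul_assoc]
    simp only [hf, hP_eval n n.lt_succ_self y, hsum, hQ, hT, Polynomial.eval_add,
      Polynomial.eval_mul, Polynomial.eval_sub, Polynomial.eval_X, Polynomial.eval_C,
      Polynomial.eval_finsetSum]
    ring

theorem IsGrunskyArray.exists_monic_faberFunction_eq {α m : ℕ × ℕ → ℂ} {Φ : ℂ → ℂ}
    (h : IsGrunskyArray α Φ) (hm : IsExpQuotient α m 1) {φ₀ : ℂ} {c : ℕ → ℂ}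
    (hΦ : HasLaurentSeries Φ φ₀ c) (n : ℕ) :
    ∃ P : Polynomial ℂ, P.Monic ∧ P.natDegree = n ∧
      ∀ y : {y : ℂ // y ≠ 0 ∧ ‖y‖ < 1}, faberFunction m n y = P.eval (Φ y) * sqrtDeriv α y := by
  have hrec (y : {y : ℂ // y ≠ 0 ∧ ‖y‖ < 1}) :=
    h.sum_laurentSubCoeff_mul_faberFunction hm hΦ y.2.1 y.2.2
  refine exists_monic_eval_mul_eq_of_recurrence (S := {y : ℂ // y ≠ 0 ∧ ‖y‖ < 1})
    (w := fun y => Φ y) (s := fun y => sqrtDeriv α y) (f := fun n y => faberFunction m n y)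
    (a := φ₀) (c := c) (σ := fun n => sqrtDerivCoeff m (n + 1)) (fun y => ?_) (fun n y => ?_) n
  · simpa [laurentSubCoeff, sqrtDerivCoeff] using hrec y 0
  · have hn := hrec y (n + 1)
    rw [Finset.sum_range_succ', Finset.sum_range_succ'] at hn
    simp only [laurentSubCoeff, zero_add, Nat.add_sub_cancel, Nat.sub_zero, one_mul,
      Nat.add_sub_add_right] at hn
    linear_combination hn

end

section

open scoped ComplexConjugate

/-! ### Andréief's identity and Parseval's formula -/

theorem sum_perm_sign_mul_prod {ι R : Type*} [Fintype ι] [DecidableEq ι] [CommRing R]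
    (G : Matrix ι ι R) :
    ∑ σ : Equiv.Perm ι, ∑ τ : Equiv.Perm ι,
      ((σ.sign : ℤ) : R) * ((τ.sign : ℤ) : R) * ∏ i, G (σ i) (τ i)
      = (Fintype.card ι).factorial * G.det := by
  have hinner (σ : Equiv.Perm ι) : ∑ τ : Equiv.Perm ι,
      ((σ.sign : ℤ) : R) * ((τ.sign : ℤ) : R) * ∏ i, G (σ i) (τ i) = G.det := by
    have hσ : ((σ.sign : ℤ) : R) * ((σ.sign : ℤ) : R) = 1 := by
      rw [← Int.cast_mul, ← Units.val_mul, Int.units_mul_self, Units.val_one, Int.cast_one]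
    rw [← Matrix.det_transpose, Matrix.det_apply', ← Equiv.sum_comp (Equiv.mulRight σ)]
    refine Finset.sum_congr rfl fun τ _ => ?_
    rw [← Equiv.prod_comp σ fun i => G.transpose (τ i) i]
    simp only [Equiv.coe_mulRight, Matrix.transpose_apply, Equiv.Perm.sign_mul,
      Equiv.Perm.mul_apply, Units.val_mul, Int.cast_mul]
    linear_combination ((τ.sign : ℤ) : R) * (∏ i, G (σ i) (τ (σ i))) * hσ
  rw [Finset.sum_congr rfl fun σ _ => hinner σ, Finset.sum_const, Finset.card_univ,
    Fintype.card_perm, nsmul_eq_mul]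

theorem integral_det_mul_det {ι 𝕜 X : Type*} [Fintype ι] [DecidableEq ι] [RCLike 𝕜]
    [MeasurableSpace X] (ν : Measure X) [SigmaFinite ν] (f g : ι → X → 𝕜)
    (hfg : ∀ j k, Integrable (fun t => f j t * g k t) ν) :
    ∫ θ : ι → X, (Matrix.of fun i j => f i (θ j)).det * (Matrix.of fun i j => g i (θ j)).det
        ∂(Measure.pi fun _ => ν)
      = (Fintype.card ι).factorial * (Matrix.of fun j k => ∫ t, f j t * g k t ∂ν).det := by
  have hexpand (θ : ι → X) :
      (Matrix.of fun i j => f i (θ j)).det * (Matrix.of fun i j => g i (θ j)).det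
        = ∑ σ : Equiv.Perm ι, ∑ τ : Equiv.Perm ι, ((σ.sign : ℤ) : 𝕜) * ((τ.sign : ℤ) : 𝕜) *
          ∏ i, (f (σ i) (θ i) * g (τ i) (θ i)) := by
    rw [Matrix.det_apply', Matrix.det_apply', Finset.sum_mul_sum]
    refine Finset.sum_congr rfl fun σ _ => Finset.sum_congr rfl fun τ _ => ?_
    simp only [Finset.prod_mul_distrib, Matrix.of_apply]
    ring
  have hint (σ τ : Equiv.Perm ι) : Integrable (fun θ : ι → X => ((σ.sign : ℤ) : 𝕜) *
      ((τ.sign : ℤ) : 𝕜) * ∏ i, (f (σ i) (θ i) * g (τ i) (θ i))) (Measure.pi fun _ => ν) :=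
    (Integrable.fintype_prod (f := fun i t => f (σ i) t * g (τ i) t) fun i =>
      hfg _ _).const_mul _
  simp_rw [hexpand]
  rw [integral_finsetSum _ fun σ _ => integrable_finsetSum _ fun τ _ => hint σ τ,
    ← sum_perm_sign_mul_prod]
  refine Finset.sum_congr rfl fun σ _ => ?_
  rw [integral_finsetSum _ fun τ _ => hint σ τ]
  refine Finset.sum_congr rfl fun τ _ => ?_
  rw [integral_const_mul,
    integral_fintype_prod_eq_prod (f := fun i t => f (σ i) t * g (τ i) t)]
  rfl

theorem integral_tsum_mul_conj_tsum {ι 𝕜 X : Type*} [Countable ι] [RCLike 𝕜] [MeasurableSpace X]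
    [DecidableEq ι] {μ : Measure X} [IsFiniteMeasure μ] {e : ι → X → 𝕜} {C : ℝ} {c : 𝕜}
    (he : ∀ i, AEStronglyMeasurable (e i) μ) (heC : ∀ i x, ‖e i x‖ ≤ C)
    (horth : ∀ i j, ∫ x, e i x * conj (e j x) ∂μ = if i = j then c else 0) {u v : ι → 𝕜}
    (hu : Summable fun i => ‖u i‖) (hv : Summable fun i => ‖v i‖) :
    ∫ x, (∑' i, u i * e i x) * conj (∑' i, v i * e i x) ∂μ = c * ∑' i, u i * conj (v i) := by
  set F : ι × ι → X → 𝕜 := fun q x => u q.1 * conj (v q.2) * (e q.1 x * conj (e q.2 x)) with hF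
  have hterm {w : ι → 𝕜} (hw : Summable fun i => ‖w i‖) (x : X) :
      Summable fun i => ‖w i * e i x‖ :=
    (hw.mul_right C).of_nonneg_of_le (fun i => norm_nonneg _) fun i =>
      (norm_mul_le _ _).trans (mul_le_mul_of_nonneg_left (heC i x) (norm_nonneg _))
  have hbound (q : ι × ι) (x : X) : ‖F q x‖ ≤ ‖u q.1‖ * ‖v q.2‖ * (C * C) := by
    have hC : 0 ≤ C := (norm_nonneg _).trans (heC q.1 x)
    simp only [hF, norm_mul, RCLike.norm_conj]
    gcongr <;> exact heC _ x
  have hmeas (q : ι × ι) : AEStronglyMeasurable (F q) μ :=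
    ((he q.1).mul (RCLike.continuous_conj.comp_aestronglyMeasurable (he q.2))).const_mul _
  have hint (q : ι × ι) : Integrable (F q) μ :=
    (integrable_const _).mono' (hmeas q) (ae_of_all _ (hbound q))
  have hsum : Summable fun q => ∫ x, ‖F q x‖ ∂μ := by
    refine (((hu.mul_of_nonneg hv (fun _ => norm_nonneg _) fun _ => norm_nonneg _).mul_right
      (C * C)).mul_left (μ.real Set.univ)).of_nonneg_of_le
      (fun q => integral_nonneg fun x => norm_nonneg _) fun q => ?_
    refine (integral_mono (hint q).norm (integrable_const _) (hbound q)).trans_eq ?_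
    rw [integral_const, smul_eq_mul]
  have hprod (x : X) : (∑' i, u i * e i x) * conj (∑' i, v i * e i x) = ∑' q, F q x := by
    rw [RCLike.conj_tsum, tsum_mul_tsum_of_summable_norm (hterm hu x)
      ((hterm hv x).congr fun i => (RCLike.norm_conj _).symm)]
    refine tsum_congr fun q => ?_
    rw [map_mul]
    ring
  have hdiag (q : ι × ι) :
      ∫ x, F q x ∂μ = if q.1 = q.2 then c * (u q.1 * conj (v q.2)) else 0 := by
    simp only [hF, integral_const_mul, horth, mul_ite, mul_zero, mul_comm c]
  have hhas := hasSum_integral_of_summable_integral_norm hint hsum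
  simp_rw [hprod, ← hhas.tsum_eq, hhas.summable.tsum_prod, ← tsum_mul_left, hdiag, tsum_ite_eq']

theorem integral_exp_int_mul_I (k : ℤ) :
    ∫ θ in Set.Icc (-Real.pi) Real.pi, Complex.exp (k * θ * Complex.I)
      = if k = 0 then 2 * (Real.pi : ℂ) else 0 := by
  have hπ : -Real.pi ≤ Real.pi := by linarith [Real.pi_pos]
  split_ifs with hk
  · simp only [hk, Int.cast_zero, zero_mul, Complex.exp_zero, integral_const,
      measureReal_restrict_apply_univ, Real.volume_real_Icc_of_le hπ, Complex.real_smul, mul_one]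
    push_cast
    ring
  · have hkI : (k : ℂ) * Complex.I ≠ 0 := mul_ne_zero (Int.cast_ne_zero.mpr hk) Complex.I_ne_zero
    have hperiod : Complex.exp (k * Complex.I * (Real.pi : ℂ))
        = Complex.exp (k * Complex.I * ((-Real.pi : ℝ) : ℂ)) :=
      Complex.exp_eq_exp_iff_exists_int.mpr ⟨k, by push_cast; ring⟩
    simp_rw [mul_right_comm _ _ Complex.I]
    rw [integral_Icc_eq_integral_Ioc, ← intervalIntegral.integral_of_le hπ,
      integral_exp_mul_complex hkI, hperiod, sub_self, zero_div]

/-- The sum of the Fourier series `∑ₖ u k exp (i k θ)`. -/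
noncomputable def fourierSum (u : ℤ → ℂ) (θ : ℝ) : ℂ :=
  ∑' k, u k * Complex.exp (k * θ * Complex.I)

theorem norm_exp_int_mul_mul_I (k : ℤ) (θ : ℝ) : ‖Complex.exp (k * θ * Complex.I)‖ = 1 := by
  exact_mod_cast Complex.norm_exp_ofReal_mul_I (k * θ)

theorem continuous_fourierSum {u : ℤ → ℂ} (hu : Summable u) : Continuous (fourierSum u) :=
  continuous_tsum (fun k => by fun_prop) hu.norm fun k θ => by
    rw [norm_mul, norm_exp_int_mul_mul_I, mul_one]

theorem integral_fourierSum_mul_conj {u v : ℤ → ℂ} (hu : Summable u) (hv : Summable v) :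
    ∫ θ in Set.Icc (-Real.pi) Real.pi, fourierSum u θ * conj (fourierSum v θ)
      = 2 * Real.pi * ∑' k, u k * conj (v k) := by
  refine integral_tsum_mul_conj_tsum (fun k => ?_) (fun k θ => (norm_exp_int_mul_mul_I k θ).le)
    (fun j k => ?_) hu.norm hv.norm
  · exact Continuous.aestronglyMeasurable (by fun_prop)
  · simp_rw [← sub_eq_zero (a := j), ← integral_exp_int_mul_I]
    refine integral_congr_ae (ae_of_all _ fun θ => ?_)
    simp only [← Complex.exp_conj, ← Complex.exp_add, map_mul, map_intCast, Complex.conj_ofReal,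
      Complex.conj_I, Int.cast_sub]
    congr 1
    ring

theorem integral_norm_det_fourierSum_sq {ι : Type*} [Fintype ι] [DecidableEq ι]
    {u : ι → ℤ → ℂ} (hu : ∀ i, Summable (u i)) :
    ((∫ θ in Set.pi Set.univ fun _ : ι => Set.Icc (-Real.pi) Real.pi,
        ‖(Matrix.of fun i j => fourierSum (u i) (θ j)).det‖ ^ 2 : ℝ) : ℂ)
      = (Fintype.card ι).factorial * (2 * Real.pi) ^ Fintype.card ι *
        (Matrix.of fun i j => ∑' k, u i k * conj (u j k)).det := by
  have hint (i j : ι) : IntegrableOn (fun θ => fourierSum (u i) θ * conj (fourierSum (u j) θ))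
      (Set.Icc (-Real.pi) Real.pi) :=
    ((continuous_fourierSum (hu i)).mul
      (Complex.continuous_conj.comp (continuous_fourierSum (hu j)))).integrableOn_Icc
  have hnorm (θ : ι → ℝ) : ((‖(Matrix.of fun i j => fourierSum (u i) (θ j)).det‖ ^ 2 : ℝ) : ℂ)
      = (Matrix.of fun i j => fourierSum (u i) (θ j)).det *
        (Matrix.of fun i j => conj (fourierSum (u i) (θ j))).det := by
    rw [Complex.ofReal_pow, ← Complex.mul_conj', RingHom.map_det]
    rfl
  have hgram : (Matrix.of fun i j => ∫ θ in Set.Icc (-Real.pi) Real.pi,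
      fourierSum (u i) θ * conj (fourierSum (u j) θ))
      = (2 * Real.pi : ℂ) • Matrix.of fun i j => ∑' k, u i k * conj (u j k) := by
    ext i j
    exact integral_fourierSum_mul_conj (hu i) (hu j)
  rw [← integral_complex_ofReal, volume_pi, Measure.restrict_pi_pi]
  simp_rw [hnorm]
  rw [integral_det_mul_det _ (fun i => fourierSum (u i)) (fun i θ => conj (fourierSum (u i) θ))
    hint, hgram, Matrix.det_smul, mul_assoc]

end

section

open scoped ComplexConjugate

/-! ### The Gram determinant formula -/

/-- The array `m (j, l) r^(-j-l-1)`. -/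
noncomputable def radial (m : ℕ × ℕ → ℂ) (r : ℝ) (p : ℕ × ℕ) : ℂ :=
  m p * (r : ℂ)⁻¹ ^ (p.1 + p.2 + 1)

/-- The Fourier coefficients of `exp (i j θ) + ∑ₗ b (j, l) exp (-i (l + 1) θ)`. -/
def faberCoeff (b : ℕ × ℕ → ℂ) (j : ℕ) : ℤ → ℂ
  | .ofNat l => if l = j then 1 else 0
  | .negSucc l => b (j, l)

/-- The matrix of inner products of the first `n` rows of the array `b`. -/
noncomputable def rowGram (b : ℕ × ℕ → ℂ) (n : ℕ) : Matrix (Fin n) (Fin n) ℂ :=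
  Matrix.of fun j k => ∑' l, b (j, l) * conj (b (k, l))

theorem hasSum_faberCoeff_mul {b : ℕ × ℕ → ℂ} {j : ℕ} {w : ℤ → ℂ} {s : ℂ}
    (h : HasSum (fun l : ℕ => b (j, l) * w (-(l + 1))) s) :
    HasSum (fun k => faberCoeff b j k * w k) (w j + s) := by
  refine HasSum.of_nat_of_neg_add_one ?_ (h.congr_fun fun l => ?_)
  · convert hasSum_ite_eq j (w j) using 2 with l
    change (if l = j then 1 else 0) * w l = _
    split_ifs with hl <;> simp [hl]
  · rw [← Int.negSucc_eq, faberCoeff]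

theorem summable_faberCoeff {b : ℕ × ℕ → ℂ} {j : ℕ} (hb : Summable fun l => b (j, l)) :
    Summable (faberCoeff b j) := by
  simpa using (hasSum_faberCoeff_mul (w := 1) (hb.hasSum.congr_fun fun l => by simp)).summable

theorem tsum_faberCoeff_mul_conj {b : ℕ × ℕ → ℂ} {j k : ℕ}
    (h : Summable fun l => b (j, l) * conj (b (k, l))) :
    ∑' i, faberCoeff b j i * conj (faberCoeff b k i)
      = (if j = k then 1 else 0) + ∑' l, b (j, l) * conj (b (k, l)) := by
  rw [(hasSum_faberCoeff_mul (w := fun i => conj (faberCoeff b k i))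
    (h.hasSum.congr_fun fun l => by rw [← Int.negSucc_eq, faberCoeff])).tsum_eq]
  congr 1
  change conj (if j = k then 1 else 0) = _
  split_ifs <;> simp

theorem norm_inv_ofReal_lt_one {r : ℝ} (hr : 1 < r) : ‖(r : ℂ)⁻¹‖ < 1 := by
  rw [norm_inv, Complex.norm_of_nonneg (zero_le_one.trans hr.le)]
  exact inv_lt_one_of_one_lt₀ hr

theorem BidiskSummable.summable_radial {m : ℕ × ℕ → ℂ} (hm : BidiskSummable m) {r : ℝ}
    (hr : 1 < r) : Summable (radial m r) := by
  have hr_inv := norm_inv_ofReal_lt_one hr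
  refine ((hm.summable hr_inv hr_inv).mul_right (r : ℂ)⁻¹).congr fun p => ?_
  rw [radial]
  ring

theorem BidiskSummable.fourierSum_faberCoeff {m : ℕ × ℕ → ℂ} (hm : BidiskSummable m) {r : ℝ}
    (hr : 1 < r) (j : ℕ) (θ : ℝ) :
    fourierSum (faberCoeff (radial m r) j) θ
      = (r : ℂ)⁻¹ ^ j * faberFunction m j (r * Complex.exp (Complex.I * θ))⁻¹ := by
  set e := Complex.exp (Complex.I * θ) with he
  have he_pow (k : ℤ) : Complex.exp (k * θ * Complex.I) = e ^ k := by
    rw [he, ← Complex.exp_int_mul]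
    ring_nf
  have hr0 : (r : ℂ) ≠ 0 := Complex.ofReal_ne_zero.mpr (by linarith)
  have he_norm : ‖e‖ = 1 := by rw [he, mul_comm, Complex.norm_exp_ofReal_mul_I]
  have hy : ‖((r : ℂ) * e)⁻¹‖ < 1 := by
    rw [mul_inv, norm_mul, norm_inv e, he_norm, inv_one, mul_one]
    exact norm_inv_ofReal_lt_one hr
  have hneg := ((hm.summable_snd j hy).hasSum.mul_left ((r : ℂ)⁻¹ ^ j * (r * e)⁻¹)).congr_fun
    (g := fun l : ℕ => radial m r (j, l) * e ^ (-(l + 1) : ℤ)) fun l => by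
      rw [zpow_neg, ← Nat.cast_succ, zpow_natCast, ← inv_pow, radial, mul_inv, Nat.succ_eq_add_one]
      ring
  simp_rw [fourierSum, he_pow]
  rw [(hasSum_faberCoeff_mul hneg).tsum_eq, faberFunction, rowSum, zpow_natCast, inv_inv, mul_add,
    mul_pow, inv_pow, inv_mul_cancel_left₀ (pow_ne_zero j hr0), mul_assoc]

theorem IsGrunskyArray.norm_deriv_eq {α : ℕ × ℕ → ℂ} {φ : ℂ → ℂ}
    (h : IsGrunskyArray α fun x => φ x⁻¹) {z : ℂ} (hz : 1 < ‖z‖) :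
    ‖deriv φ z‖ = ‖sqrtDeriv α z⁻¹‖ ^ 2 := by
  have hz0 : z ≠ 0 := norm_pos_iff.mp (zero_lt_one.trans hz)
  have hy : ‖z⁻¹‖ < 1 := by
    rw [norm_inv]
    exact inv_lt_one_of_one_lt₀ hz
  have hcomp := (h.hasDerivAt (inv_ne_zero hz0) (inv_ne_zero hz0) hy hy).comp z
    (hasDerivAt_inv hz0)
  have hφ : (fun x => φ x⁻¹) ∘ Inv.inv = φ := funext fun w => congrArg φ (inv_inv w)
  have hsq : sqrtDeriv α z⁻¹ ^ 2 = Complex.exp (-bidiskSum (grunskySeries α) z⁻¹ z⁻¹) := by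
    rw [sqrtDeriv, ← Complex.exp_nat_mul]
    ring_nf
  rw [hφ] at hcomp
  rw [hcomp.deriv, ← norm_pow, hsq, sub_self, zero_mul, add_zero]
  field_simp

theorem prod_norm_sub_sq_eq_norm_det_vandermonde_sq {n : ℕ} (v : Fin n → ℂ) :
    ∏ p ∈ Finset.univ.filter (fun p : Fin n × Fin n => p.1 < p.2), ‖v p.1 - v p.2‖ ^ 2
      = ‖(Matrix.vandermonde v).det‖ ^ 2 := by
  rw [Matrix.det_vandermonde, Finset.prod_filter, Fintype.prod_prod_type, norm_prod,
    ← Finset.prod_pow]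
  refine Finset.prod_congr rfl fun i _ => ?_
  rw [norm_prod, ← Finset.prod_pow, ← Finset.filter_lt_eq_Ioi, Finset.prod_filter]
  simp only [norm_sub_rev]

theorem prod_inv_pow_sq {𝕜 : Type*} [Field 𝕜] (r : 𝕜) (n : ℕ) :
    (∏ i : Fin n, r⁻¹ ^ (i : ℕ)) ^ 2 = (r ^ (n * (n - 1)))⁻¹ := by
  rw [Fin.prod_univ_eq_prod_range (fun i => r⁻¹ ^ i), Finset.prod_pow_eq_pow_sum, ← pow_mul,
    Finset.sum_range_id_mul_two, inv_pow]

section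

variable {α m : ℕ × ℕ → ℂ} {φ : ℂ → ℂ} {φ₀ : ℂ} {c : ℕ → ℂ}

theorem IsGrunskyArray.norm_det_faberFunction_sq (h : IsGrunskyArray α fun x => φ x⁻¹)
    (hm : IsExpQuotient α m 1) (hΦ : HasLaurentSeries (fun x => φ x⁻¹) φ₀ c) {n : ℕ}
    {z : Fin n → ℂ} (hz : ∀ i, 1 < ‖z i‖) :
    ‖(Matrix.of fun i j : Fin n => faberFunction m i (z j)⁻¹).det‖ ^ 2
      = (∏ p ∈ Finset.univ.filter (fun p : Fin n × Fin n => p.1 < p.2),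
          ‖φ (z p.1) - φ (z p.2)‖ ^ 2) * ∏ i, ‖deriv φ (z i)‖ := by
  have hz_inv (j : Fin n) : (z j)⁻¹ ≠ 0 ∧ ‖(z j)⁻¹‖ < 1 := by
    rw [norm_inv]
    exact ⟨inv_ne_zero (norm_pos_iff.mp (zero_lt_one.trans (hz j))), inv_lt_one_of_one_lt₀ (hz j)⟩
  choose P hP_monic hP_deg hP_eval using h.exists_monic_faberFunction_eq hm hΦ
  have hentry : (Matrix.of fun i j : Fin n => faberFunction m i (z j)⁻¹)
      = Matrix.of fun i j : Fin n => sqrtDeriv α (z j)⁻¹ *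
        (Matrix.of fun i j : Fin n => (P j).eval (φ (z i))).transpose i j := by
    ext i j
    simp only [Matrix.of_apply, Matrix.transpose_apply]
    rw [hP_eval i ⟨_, hz_inv j⟩, inv_inv, mul_comm]
  rw [hentry, Matrix.det_mul_row, Matrix.det_transpose,
    ← Matrix.det_eval_matrixOfPolynomials_eq_det_vandermonde (fun i => φ (z i)) (fun j => P j)
      (fun i => hP_deg i) (fun i => hP_monic i), norm_mul, mul_pow, mul_comm,
    prod_norm_sub_sq_eq_norm_det_vandermonde_sq fun i => φ (z i), norm_prod, ← Finset.prod_pow]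
  congr 1
  exact Finset.prod_congr rfl fun i _ => (h.norm_deriv_eq (hz i)).symm

theorem IsGrunskyArray.norm_det_fourierSum_sq (h : IsGrunskyArray α fun x => φ x⁻¹)
    (hm : IsExpQuotient α m 1) (hΦ : HasLaurentSeries (fun x => φ x⁻¹) φ₀ c) {r : ℝ}
    (hr : 1 < r) {n : ℕ} (θ : Fin n → ℝ) :
    ‖(Matrix.of fun i j : Fin n => fourierSum (faberCoeff (radial m r) i) (θ j)).det‖ ^ 2
      = (r ^ (n * (n - 1)))⁻¹ *
        ((∏ p ∈ Finset.univ.filter (fun p : Fin n × Fin n => p.1 < p.2),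
            ‖φ (r * Complex.exp (Complex.I * θ p.1))
              - φ (r * Complex.exp (Complex.I * θ p.2))‖ ^ 2) *
          ∏ i, ‖deriv φ (r * Complex.exp (Complex.I * θ i))‖) := by
  have hr0 : 0 ≤ r := zero_le_one.trans hr.le
  have hz (i : Fin n) : 1 < ‖(r : ℂ) * Complex.exp (Complex.I * θ i)‖ := by
    rwa [norm_mul, mul_comm Complex.I, Complex.norm_exp_ofReal_mul_I, mul_one,
      Complex.norm_of_nonneg hr0]
  have hentry : (Matrix.of fun i j : Fin n => fourierSum (faberCoeff (radial m r) i) (θ j))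
      = Matrix.of fun i j : Fin n => (r : ℂ)⁻¹ ^ (i : ℕ) * (Matrix.of fun i j : Fin n =>
        faberFunction m i (r * Complex.exp (Complex.I * θ j))⁻¹) i j := by
    ext i j
    exact hm.bidiskSummable.fourierSum_faberCoeff hr i (θ j)
  rw [hentry, Matrix.det_mul_column, norm_mul, mul_pow, h.norm_det_faberFunction_sq hm hΦ hz,
    ← norm_pow, prod_inv_pow_sq, norm_inv, norm_pow, Complex.norm_of_nonneg hr0]

theorem summable_mul_conj {ι 𝕜 : Type*} [RCLike 𝕜] {u v : ι → 𝕜}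
    (hu : Summable fun i => ‖u i‖ ^ 2) (hv : Summable fun i => ‖v i‖ ^ 2) :
    Summable fun i => ‖u i * conj (v i)‖ := by
  refine (hu.add hv).of_nonneg_of_le (fun i => norm_nonneg _) fun i => ?_
  rw [norm_mul, RCLike.norm_conj]
  nlinarith [two_mul_le_add_sq ‖u i‖ ‖v i‖, sq_nonneg ‖u i‖, sq_nonneg ‖v i‖]

theorem summable_norm_sq_of_summable {ι E : Type*} [SeminormedAddCommGroup E] {u : ι → E}
    (hu : Summable fun i => ‖u i‖) : Summable fun i => ‖u i‖ ^ 2 := by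
  refine .of_norm_bounded_eventually hu ?_
  filter_upwards [hu.tendsto_cofinite_zero.eventually_le_const zero_lt_one] with i hi
  rw [norm_pow, norm_norm, sq]
  exact mul_le_of_le_one_left (norm_nonneg _) hi

theorem BidiskSummable.summable_norm_sq_radial {m : ℕ × ℕ → ℂ} (hm : BidiskSummable m) {r : ℝ}
    (hr : 1 < r) : Summable fun p => ‖radial m r p‖ ^ 2 :=
  summable_norm_sq_of_summable (hm.summable_radial hr).norm

theorem IsGrunskyArray.zn_div_two_pi_pow_eq_det (h : IsGrunskyArray α fun x => φ x⁻¹)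
    (hm : IsExpQuotient α m 1) (hΦ : HasLaurentSeries (fun x => φ x⁻¹) φ₀ c) {r : ℝ}
    (hr : 1 < r) (n : ℕ) :
    ((Zn φ n r / (2 * Real.pi) ^ n : ℝ) : ℂ) = (1 + rowGram (radial m r) n).det := by
  have hrow (j : ℕ) : Summable fun l => ‖radial m r (j, l)‖ ^ 2 :=
    (hm.bidiskSummable.summable_norm_sq_radial hr).prod_factor j
  have hZn : Zn φ n r = (n.factorial : ℝ)⁻¹ *
      ∫ θ in Set.pi Set.univ fun _ : Fin n => Set.Icc (-Real.pi) Real.pi,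
        ‖(Matrix.of fun i j : Fin n => fourierSum (faberCoeff (radial m r) i) (θ j)).det‖ ^ 2 := by
    simp_rw [h.norm_det_fourierSum_sq hm hΦ hr, integral_const_mul]
    rw [Zn, one_div, mul_inv, mul_assoc]
  have hgram : (Matrix.of fun i j : Fin n => ∑' k, faberCoeff (radial m r) i k *
      conj (faberCoeff (radial m r) j k)) = 1 + rowGram (radial m r) n := by
    ext i j
    have hij : Summable fun l => radial m r (i, l) * conj (radial m r (j, l)) :=
      (summable_mul_conj (hrow i) (hrow j)).of_norm
    rw [Matrix.of_apply, tsum_faberCoeff_mul_conj hij, Matrix.add_apply, Matrix.one_apply,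
      rowGram, Matrix.of_apply]
    simp only [Fin.ext_iff]
  have hfac : (n.factorial : ℂ) ≠ 0 := Nat.cast_ne_zero.mpr n.factorial_ne_zero
  have hpi : (2 * Real.pi : ℂ) ^ n ≠ 0 := pow_ne_zero n (by exact_mod_cast Real.two_pi_pos.ne')
  rw [hZn, Complex.ofReal_div, Complex.ofReal_mul,
    integral_norm_det_fourierSum_sq fun i : Fin n =>
      summable_faberCoeff ((hm.bidiskSummable.summable_radial hr).prod_factor i), hgram,
    Fintype.card_fin]
  push_cast
  field_simp

end

end

section

open scoped ComplexConjugate ComplexOrder Topology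

/-! ### Limits of the Gram determinants -/

theorem one_add_sum_le_prod_one_add {ι R : Type*} [CommSemiring R] [PartialOrder R]
    [IsOrderedRing R] (s : Finset ι) {f : ι → R} (hf : ∀ i ∈ s, 0 ≤ f i) :
    1 + ∑ i ∈ s, f i ≤ ∏ i ∈ s, (1 + f i) := by
  classical
  induction s using Finset.induction_on with
  | empty => simp
  | insert a s ha ih =>
    obtain ⟨hfa, hfs⟩ := (Finset.forall_mem_insert _ _ _).mp hf
    rw [Finset.sum_insert ha, Finset.prod_insert ha]
    calc 1 + (f a + ∑ i ∈ s, f i)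
        ≤ 1 + (f a + ∑ i ∈ s, f i) + f a * ∑ i ∈ s, f i :=
          le_add_of_nonneg_right (mul_nonneg hfa (Finset.sum_nonneg hfs))
      _ = (1 + f a) * (1 + ∑ i ∈ s, f i) := by ring
      _ ≤ (1 + f a) * ∏ i ∈ s, (1 + f i) :=
          mul_le_mul_of_nonneg_left (ih hfs) (add_nonneg zero_le_one hfa)

section Matrix

variable {ι 𝕜 : Type*} [Fintype ι] [DecidableEq ι] [RCLike 𝕜] {A : Matrix ι ι 𝕜}

theorem det_one_add_eq_prod_eigenvalues (hA : A.IsHermitian) :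
    (1 + A).det = ∏ i, (1 + (hA.eigenvalues i : 𝕜)) := by
  have hchar := A.eval_charpoly (-1)
  have hneg : Matrix.scalar ι (-1 : 𝕜) - A = -(1 + A) := by
    rw [map_neg, map_one, neg_add', sub_eq_add_neg]
  have hfactor (i : ι) : (-1 : 𝕜) - hA.eigenvalues i = -(1 + hA.eigenvalues i) := by ring
  rw [hA.charpoly_eq, Polynomial.eval_prod, hneg, Matrix.det_neg] at hchar
  simp only [Polynomial.eval_sub, Polynomial.eval_X, Polynomial.eval_C, hfactor,
    Finset.prod_neg, Finset.card_univ] at hchar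
  exact (mul_left_cancel₀ (pow_ne_zero _ (neg_ne_zero.mpr one_ne_zero)) hchar).symm

theorem re_det_one_add_eq_prod_eigenvalues (hA : A.IsHermitian) :
    RCLike.re (1 + A).det = ∏ i, (1 + hA.eigenvalues i) := by
  rw [det_one_add_eq_prod_eigenvalues hA, ← RCLike.ofReal_re (K := 𝕜) (∏ i, _)]
  push_cast
  rfl

theorem re_trace_eq_sum_eigenvalues (hA : A.IsHermitian) :
    RCLike.re A.trace = ∑ i, hA.eigenvalues i := by
  rw [hA.trace_eq_sum_eigenvalues, map_sum]
  simp only [RCLike.ofReal_re]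

theorem one_add_re_trace_le_re_det_one_add (hA : A.PosSemidef) :
    1 + RCLike.re A.trace ≤ RCLike.re (1 + A).det := by
  rw [re_trace_eq_sum_eigenvalues hA.isHermitian, re_det_one_add_eq_prod_eigenvalues hA.isHermitian]
  exact one_add_sum_le_prod_one_add _ fun i _ => hA.eigenvalues_nonneg i

theorem re_det_one_add_le_exp_re_trace (hA : A.PosSemidef) :
    RCLike.re (1 + A).det ≤ Real.exp (RCLike.re A.trace) := by
  rw [re_trace_eq_sum_eigenvalues hA.isHermitian, re_det_one_add_eq_prod_eigenvalues hA.isHermitian]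
  exact Real.prod_one_add_le_exp_sum _ hA.eigenvalues_nonneg

end Matrix

section RowGram

variable {b : ℕ × ℕ → ℂ} {n : ℕ}

theorem posSemidef_rowGram (hb : ∀ j < n, Summable fun l => ‖b (j, l)‖ ^ 2) :
    (rowGram b n).PosSemidef := by
  have hmem (j : Fin n) : Memℓp (fun l => conj (b (j, l))) 2 := by
    rw [memℓp_two_iff_summable_norm_sq]
    simpa only [RCLike.norm_conj] using hb j j.2
  have hgram : rowGram b n =
      Matrix.gram ℂ fun j : Fin n => (⟨_, hmem j⟩ : lp (fun _ : ℕ => ℂ) 2) := by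
    ext j k
    rw [rowGram, Matrix.of_apply, Matrix.gram_apply, lp.inner_eq_tsum]
    exact tsum_congr fun l => by rw [RCLike.inner_apply, Complex.conj_conj, mul_comm]
  exact hgram ▸ Matrix.posSemidef_gram ℂ _

theorem re_trace_rowGram (b : ℕ × ℕ → ℂ) (n : ℕ) :
    (rowGram b n).trace.re = ∑ j ∈ Finset.range n, ∑' l, ‖b (j, l)‖ ^ 2 := by
  rw [← Fin.sum_univ_eq_sum_range (fun j => ∑' l, ‖b (j, l)‖ ^ 2), Matrix.trace, Complex.re_sum]
  refine Finset.sum_congr rfl fun j _ => ?_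
  simp only [Matrix.diag_apply, rowGram, Matrix.of_apply, Complex.mul_conj']
  norm_cast

theorem one_add_sum_le_re_det_one_add_rowGram
    (hb : ∀ j < n, Summable fun l => ‖b (j, l)‖ ^ 2) :
    1 + ∑ j ∈ Finset.range n, ∑' l, ‖b (j, l)‖ ^ 2 ≤ (1 + rowGram b n).det.re := by
  rw [← re_trace_rowGram]
  exact one_add_re_trace_le_re_det_one_add (posSemidef_rowGram hb)

theorem re_det_one_add_rowGram_le_exp_sum (hb : ∀ j < n, Summable fun l => ‖b (j, l)‖ ^ 2) :
    (1 + rowGram b n).det.re ≤ Real.exp (∑ j ∈ Finset.range n, ∑' l, ‖b (j, l)‖ ^ 2) := by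
  rw [← re_trace_rowGram]
  exact re_det_one_add_le_exp_re_trace (posSemidef_rowGram hb)

theorem one_le_re_det_one_add_rowGram (hb : ∀ j < n, Summable fun l => ‖b (j, l)‖ ^ 2) :
    1 ≤ (1 + rowGram b n).det.re :=
  (le_add_of_nonneg_right <| Finset.sum_nonneg fun _ _ => tsum_nonneg fun _ => by positivity).trans
    (one_add_sum_le_re_det_one_add_rowGram hb)

end RowGram

section Limit

variable {m : ℕ × ℕ → ℂ} {n : ℕ}

theorem norm_radial_le (m : ℕ × ℕ → ℂ) {r : ℝ} (hr : 1 < r) (p : ℕ × ℕ) :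
    ‖radial m r p‖ ≤ ‖m p‖ := by
  rw [radial, norm_mul, norm_pow]
  exact mul_le_of_le_one_right (norm_nonneg _)
    (pow_le_one₀ (norm_nonneg _) (norm_inv_ofReal_lt_one hr).le)

theorem tendsto_radial (m : ℕ × ℕ → ℂ) (p : ℕ × ℕ) :
    Tendsto (fun r => radial m r p) (𝓝[>] 1) (𝓝 (m p)) := by
  have hcont : ContinuousAt (fun r : ℝ => radial m r p) 1 :=
    continuousAt_const.mul ((Complex.continuous_ofReal.continuousAt.inv₀ (by simp)).pow _)
  have hone : radial m 1 p = m p := by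
    rw [radial, Complex.ofReal_one, inv_one, one_pow, mul_one]
  simpa only [hone] using hcont.tendsto.mono_left nhdsWithin_le_nhds

theorem tendsto_det_one_add_rowGram_radial (hm : ∀ j < n, Summable fun l => ‖m (j, l)‖ ^ 2) :
    Tendsto (fun r : ℝ => (1 + rowGram (radial m r) n).det) (𝓝[>] 1)
      (𝓝 (1 + rowGram m n).det) := by
  have hgram : Tendsto (fun r : ℝ => rowGram (radial m r) n) (𝓝[>] 1) (𝓝 (rowGram m n)) := by
    refine tendsto_pi_nhds.mpr fun j => tendsto_pi_nhds.mpr fun k => ?_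
    refine tendsto_tsum_of_dominated_convergence (summable_mul_conj (hm j j.2) (hm k k.2))
      (fun l => (tendsto_radial m _).mul
        ((Complex.continuous_conj.tendsto _).comp (tendsto_radial m _))) ?_
    filter_upwards [self_mem_nhdsWithin] with r hr l
    rw [norm_mul, norm_mul, RCLike.norm_conj, RCLike.norm_conj]
    exact mul_le_mul (norm_radial_le m hr _) (norm_radial_le m hr _) (norm_nonneg _) (norm_nonneg _)
  exact ((continuous_const.add continuous_id).matrix_det.tendsto _).comp hgram

theorem BidiskSummable.tsum_row_le_re_det_one_add_rowGram (hm : BidiskSummable m) {r : ℝ}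
    (hr : 1 < r) {j : ℕ} (hj : j < n) :
    ∑' l, ‖radial m r (j, l)‖ ^ 2 ≤ (1 + rowGram (radial m r) n).det.re :=
  calc ∑' l, ‖radial m r (j, l)‖ ^ 2
      ≤ ∑ j ∈ Finset.range n, ∑' l, ‖radial m r (j, l)‖ ^ 2 :=
        Finset.single_le_sum (f := fun j => ∑' l, ‖radial m r (j, l)‖ ^ 2)
          (fun _ _ => tsum_nonneg fun _ => by positivity) (Finset.mem_range.mpr hj)
    _ ≤ 1 + ∑ j ∈ Finset.range n, ∑' l, ‖radial m r (j, l)‖ ^ 2 :=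
        le_add_of_nonneg_left zero_le_one
    _ ≤ (1 + rowGram (radial m r) n).det.re :=
        one_add_sum_le_re_det_one_add_rowGram fun _ _ =>
          (hm.summable_norm_sq_radial hr).prod_factor _

theorem BidiskSummable.tendsto_re_det_one_add_rowGram_atTop (hm : BidiskSummable m) {j : ℕ}
    (hj : j < n) (hrow : ¬ Summable fun l => ‖m (j, l)‖ ^ 2) :
    Tendsto (fun r : ℝ => (1 + rowGram (radial m r) n).det.re) (𝓝[>] 1) atTop := by
  rw [tendsto_atTop]
  intro C
  rw [not_summable_iff_tendsto_nat_atTop_of_nonneg fun _ => by positivity] at hrow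
  obtain ⟨L, hL⟩ := (hrow.eventually_gt_atTop C).exists
  have hpartial : Tendsto (fun r : ℝ => ∑ l ∈ Finset.range L, ‖radial m r (j, l)‖ ^ 2) (𝓝[>] 1)
      (𝓝 (∑ l ∈ Finset.range L, ‖m (j, l)‖ ^ 2)) :=
    tendsto_finsetSum _ fun l _ => (tendsto_radial m (j, l)).norm.pow 2
  filter_upwards [hpartial.eventually_const_lt hL, self_mem_nhdsWithin] with r hC hr
  calc C ≤ ∑ l ∈ Finset.range L, ‖radial m r (j, l)‖ ^ 2 := hC.le
    _ ≤ ∑' l, ‖radial m r (j, l)‖ ^ 2 :=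
        ((hm.summable_norm_sq_radial hr).prod_factor j).sum_le_tsum _ fun _ _ => by positivity
    _ ≤ (1 + rowGram (radial m r) n).det.re := hm.tsum_row_le_re_det_one_add_rowGram hr hj

open Classical in
/-- The limit of the determinants of `1 + rowGram (radial m r) n` as `r` decreases to `1`; it is
infinite as soon as one of the first `n` rows of `m` is not square summable, in which case
`rowGram m n` itself is a junk value. -/
noncomputable def limitDet (m : ℕ × ℕ → ℂ) (n : ℕ) : ℝ≥0∞ :=
  if ∀ j < n, Summable fun l => ‖m (j, l)‖ ^ 2 then ENNReal.ofReal (1 + rowGram m n).det.re else ⊤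

theorem limitDet_pos (m : ℕ × ℕ → ℂ) (n : ℕ) : 0 < limitDet m n := by
  unfold limitDet
  split_ifs with hrow
  · exact ENNReal.ofReal_pos.mpr (zero_lt_one.trans_le (one_le_re_det_one_add_rowGram hrow))
  · exact ENNReal.zero_lt_top

theorem BidiskSummable.tendsto_limitDet (hm : BidiskSummable m) (n : ℕ) :
    Tendsto (fun r : ℝ => ENNReal.ofReal (1 + rowGram (radial m r) n).det.re) (𝓝[>] 1)
      (𝓝 (limitDet m n)) := by
  unfold limitDet
  split_ifs with hrow
  · exact ENNReal.tendsto_ofReal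
      ((Complex.continuous_re.tendsto _).comp (tendsto_det_one_add_rowGram_radial hrow))
  · push Not at hrow
    obtain ⟨j, hj, hrow⟩ := hrow
    exact ENNReal.tendsto_ofReal_atTop.comp (hm.tendsto_re_det_one_add_rowGram_atTop hj hrow)

theorem limitDet_le_exp_tsum (hm : Summable fun p => ‖m p‖ ^ 2) (n : ℕ) :
    limitDet m n ≤ ENNReal.ofReal (Real.exp (∑' p, ‖m p‖ ^ 2)) := by
  have hrow (j : ℕ) : Summable fun l => ‖m (j, l)‖ ^ 2 := hm.prod_factor j
  rw [limitDet, if_pos fun j _ => hrow j, hm.tsum_prod]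
  refine ENNReal.ofReal_le_ofReal ((re_det_one_add_rowGram_le_exp_sum fun j _ => hrow j).trans ?_)
  exact Real.exp_le_exp.mpr (hm.prod.sum_le_tsum _ fun _ _ => tsum_nonneg fun _ => by positivity)

theorem summable_row_and_sum_le_of_limitDet_le {C : ℝ} (h : limitDet m n ≤ ENNReal.ofReal C) :
    (∀ j < n, Summable fun l => ‖m (j, l)‖ ^ 2) ∧
      ∑ j ∈ Finset.range n, ∑' l, ‖m (j, l)‖ ^ 2 ≤ C := by
  unfold limitDet at h
  split_ifs at h with hrow
  · have hdet := one_le_re_det_one_add_rowGram hrow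
    have hC : (1 + rowGram m n).det.re ≤ C :=
      (ENNReal.ofReal_le_ofReal_iff'.mp h).resolve_right (by linarith)
    exact ⟨hrow, by linarith [one_add_sum_le_re_det_one_add_rowGram hrow]⟩
  · exact absurd h (not_le.mpr ENNReal.ofReal_lt_top)

theorem summable_norm_sq_iff_limsup_limitDet_lt_top (m : ℕ × ℕ → ℂ) :
    (Summable fun p => ‖m p‖ ^ 2) ↔ limsup (limitDet m) atTop < ⊤ := by
  constructor
  · exact fun hm => (limsup_le_of_le (h := .of_forall (limitDet_le_exp_tsum hm))).trans_lt
      ENNReal.ofReal_lt_top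
  · intro hlim
    obtain ⟨C, hC, hC_top⟩ := exists_between hlim
    have hbound : ∀ᶠ n in atTop, (∀ j < n, Summable fun l => ‖m (j, l)‖ ^ 2) ∧
        ∑ j ∈ Finset.range n, ∑' l, ‖m (j, l)‖ ^ 2 ≤ C.toReal := by
      filter_upwards [eventually_lt_of_limsup_lt hC] with n hn
      exact summable_row_and_sum_le_of_limitDet_le
        ((ENNReal.ofReal_toReal hC_top.ne).symm ▸ hn.le)
    obtain ⟨N, hN⟩ := eventually_atTop.mp hbound
    rw [summable_prod_of_nonneg fun p => by positivity]
    refine ⟨fun j => (hN _ (le_max_left N (j + 1))).1 j (le_max_right N (j + 1)), ?_⟩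
    refine summable_of_sum_range_le (c := C.toReal) (fun _ => tsum_nonneg fun _ => by positivity)
      fun n => ?_
    exact (Finset.sum_le_sum_of_subset_of_nonneg (Finset.range_mono (le_max_right N n))
      fun _ _ _ => tsum_nonneg fun _ => by positivity).trans (hN _ (le_max_left N n)).2

end Limit

end

section

variable {φ : ℂ → ℂ} {α : ℕ × ℕ → ℂ} {φ₀ : ℂ} {c : ℕ → ℂ}

theorem inv_zpow_neg_sub_one {K : Type*} [DivisionRing K] (x : K) (k : ℕ) :
    x⁻¹ ^ (-(k : ℤ) - 1) = x ^ (k + 1) := by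
  rw [← neg_add', zpow_neg, inv_zpow, inv_inv]
  exact_mod_cast zpow_natCast x (k + 1)

theorem one_lt_norm_inv {K : Type*} [NormedDivisionRing K] {x : K} (hx0 : x ≠ 0) (hx : ‖x‖ < 1) :
    1 < ‖x⁻¹‖ := by
  rw [norm_inv]
  exact (one_lt_inv₀ (norm_pos_iff.mpr hx0)).mpr hx

theorem bidiskSummable_of_summable_exterior
    (hα : ∀ z : ℂ, 1 < ‖z‖ →
      Summable fun p : ℕ × ℕ => ‖α p * z ^ (-(p.1 : ℤ) - 1) * z ^ (-(p.2 : ℤ) - 1)‖) :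
    BidiskSummable α := by
  refine .of_summable_pos fun ρ h0 h1 => ?_
  have hρ : (ρ : ℂ) ≠ 0 := Complex.ofReal_ne_zero.mpr h0.ne'
  have hnorm : ‖(ρ : ℂ)‖ = ρ := Complex.norm_of_nonneg h0.le
  refine ((hα _ (one_lt_norm_inv hρ (hnorm.trans_lt h1))).mul_right (ρ ^ 2)⁻¹).congr fun p => ?_
  rw [inv_zpow_neg_sub_one, inv_zpow_neg_sub_one, norm_mul, norm_mul, norm_pow, norm_pow, hnorm]
  field_simp
  ring

theorem isGrunskyArray_of_exterior (hsymm : α ∘ Prod.swap = α)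
    (hα : ∀ z ζ : ℂ, 1 < ‖z‖ → 1 < ‖ζ‖ →
      Summable (fun p : ℕ × ℕ => ‖α p * ζ ^ (-(p.1 : ℤ) - 1) * z ^ (-(p.2 : ℤ) - 1)‖) ∧
      φ ζ - φ z = (ζ - z) * Complex.exp
        (-∑' p : ℕ × ℕ, α p * ζ ^ (-(p.1 : ℤ) - 1) * z ^ (-(p.2 : ℤ) - 1))) :
    IsGrunskyArray α fun x => φ x⁻¹ where
  summable := bidiskSummable_of_summable_exterior fun z hz => (hα z z hz hz).1
  comp_swap := hsymm
  sub_eq x y hx0 hy0 hx hy := by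
    rw [(hα _ _ (one_lt_norm_inv hy0 hy) (one_lt_norm_inv hx0 hx)).2, bidiskSum_grunskySeries,
      bidiskSum, ← tsum_mul_left]
    congr! 5 with p
    rw [inv_zpow_neg_sub_one, inv_zpow_neg_sub_one]
    ring

theorem hasLaurentSeries_of_exterior
    (hφ : ∀ z : ℂ, 1 < ‖z‖ → Summable (fun k : ℕ => ‖c k * z ^ (-(k : ℤ) - 1)‖) ∧
      φ z = z + φ₀ + ∑' k : ℕ, c k * z ^ (-(k : ℤ) - 1)) :
    HasLaurentSeries (fun x => φ x⁻¹) φ₀ c := by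
  intro y hy0 hy
  obtain ⟨hsum, hval⟩ := hφ _ (one_lt_norm_inv hy0 hy)
  have htail : φ y⁻¹ - y⁻¹ - φ₀ = ∑' k : ℕ, c k * y⁻¹ ^ (-(k : ℤ) - 1) := by
    rw [hval]
    ring
  simpa only [htail, inv_zpow_neg_sub_one] using hsum.of_norm.hasSum

theorem IsGrunskyArray.tendsto_zn {m : ℕ × ℕ → ℂ} (h : IsGrunskyArray α fun x => φ x⁻¹)
    (hm : IsExpQuotient α m 1) (hΦ : HasLaurentSeries (fun x => φ x⁻¹) φ₀ c) (n : ℕ) :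
    Tendsto (fun r : ℝ => ENNReal.ofReal (Zn φ n r / (2 * Real.pi) ^ n))
      (nhdsWithin 1 (Set.Ioi 1)) (nhds (limitDet m n)) := by
  refine (hm.bidiskSummable.tendsto_limitDet n).congr' ?_
  filter_upwards [self_mem_nhdsWithin] with r hr
  rw [← h.zn_div_two_pi_pow_eq_det hm hΦ hr n, Complex.ofReal_re]

end

/-- For a univalent `φ` on the exterior disk with hydrodynamic
normalization (so the associated curve has capacity 1) and Grunsky coefficients
`a_{kℓ}`, for each `n ≥ 1` the limit `Z̃_n = lim_{r→1+} Z_n(r)/(2π)^n` exists in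
`(0, ∞]`, and the curve is a Weil–Petersson quasicircle (`∑ kℓ|a_{kℓ}|² < ∞`) if and
only if `limsup_{n→∞} Z̃_n < ∞`. -/
theorem stmt16 (φ : ℂ → ℂ) (φ₀ : ℂ) (c : ℕ → ℂ) (a : ℕ → ℕ → ℂ)
    (hφ : DifferentiableOn ℂ φ {z : ℂ | 1 < norm z})
    (hinj : Set.InjOn φ {z : ℂ | 1 < norm z})
    (hLaurent : ∀ z : ℂ, 1 < norm z →
      Summable (fun k : ℕ => norm (c k * z ^ (-(k : ℤ) - 1))) ∧
      φ z = z + φ₀ + ∑' k : ℕ, c k * z ^ (-(k : ℤ) - 1))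
    (hsym : ∀ k l, a k l = a l k)
    (hGrunsky : ∀ z ζ : ℂ, 1 < norm z → 1 < norm ζ →
      Summable (fun p : ℕ × ℕ =>
        norm (a (p.1 + 1) (p.2 + 1) * ζ ^ (-(p.1 : ℤ) - 1) * z ^ (-(p.2 : ℤ) - 1))) ∧
      φ ζ - φ z = (ζ - z) * Complex.exp
        (-∑' p : ℕ × ℕ, a (p.1 + 1) (p.2 + 1) * ζ ^ (-(p.1 : ℤ) - 1) * z ^ (-(p.2 : ℤ) - 1))) :
    ∃ Zt : ℕ → ℝ≥0∞,
      (∀ n : ℕ, 1 ≤ n → 0 < Zt n ∧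
        Tendsto (fun r : ℝ => ENNReal.ofReal (Zn φ n r / (2 * Real.pi) ^ n))
          (nhdsWithin 1 (Set.Ioi 1)) (nhds (Zt n))) ∧
      (Summable (fun p : ℕ × ℕ =>
          (((p.1 + 1) * (p.2 + 1) : ℕ) : ℝ) * norm (a (p.1 + 1) (p.2 + 1)) ^ 2)
        ↔ Filter.limsup Zt atTop < ⊤) := by
  set α : ℕ × ℕ → ℂ := fun p => a (p.1 + 1) (p.2 + 1)
  have hα : IsGrunskyArray α fun x => φ x⁻¹ :=
    isGrunskyArray_of_exterior (funext fun p => hsym _ _) hGrunsky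
  have hΦ : HasLaurentSeries (fun x => φ x⁻¹) φ₀ c := hasLaurentSeries_of_exterior hLaurent
  obtain ⟨m, hm⟩ := IsExpQuotient.exists_of_bidiskSummable hα.summable
  refine ⟨limitDet m, fun n _ => ⟨limitDet_pos m n, hα.tendsto_zn hm hΦ n⟩, ?_⟩
  rw [← summable_norm_sq_iff_limsup_limitDet_lt_top, ← hα.summable_grunskyWeight_iff hm]
  exact summable_congr fun p => by rw [grunskyWeight]; push_cast; rfl
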